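/- arXiv:2201.00306 — 2 statements merged into one kernel-verified Lean document; each statement's English description precedes it below -/
import Mathlib

section
/- Let n ≥ 2 and k ≥ 1 be integers, and let Sp_{2n}(ℤ) denote the symplectic group of 2n×2n integer matrices g satisfying gᵀ J g = J, where J is the block matrix (0, I_n; −I_n, 0). Then the subgroup of Sp_{2n}(ℤ) generated by the matrices of the form (I_n, B; 0, I_n) and of the form (I_n, 0; C, I_n), where B and C range over symmetric n×n integer matrices all of whose entries are divisible by k, has finite index in Sp_{2n}(ℤ). -/
/-!
Let `ω` be the symplectic form on `ℤ²ⁿ`, `T u t` the transvection `x ↦ x + t ω(u, x) u`, and `H`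
the subgroup generated by the block unipotent matrices of level `k`.

* `H` contains `T u (k ^ 6 t)` for *every* vector `u` and every integer `t` (`Lagr.T_all`). The
  generators contain `T u (k t)` for `u` in one of the two standard Lagrangian summands; since
  `n ≥ 2`, conjugating these by each other gives transvections along vectors mixing the two
  summands, first in one hyperbolic plane and then in a sum of them.

* Let `m = 2 k ^ 6` and let `N ≤ H` be the subgroup generated by all `T u (m t)`; it is normal.
  If `g` lies in the congruence subgroup of level `m ^ 2` and `e` is the first basis vector, some
  element of `N` maps `g e` back to `e` (`exists_act_act_eq`). The argument is elementary: write
  `g e = a e + b f + c r` with `r` primitive in the orthogonal complement of the first hyperbolic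
  plane, arrange `c ≠ 0`, then that `a` and `c` are coprime, and then eliminate. Hence in
  `Q = Sp_{2n}(ℤ) / N` the image of the congruence subgroup commutes with the image `τ` of
  `T e 1`.

* `Sp_{2n}(ℤ)` is the normal closure of `T e 1` (`normalClosure_eq_top`), so the image of the
  congruence subgroup is central in `Q`, and the centre of `Q` has finite index. By Schur's theorem
  the commutator subgroup of `Q` is finite, and the abelianization of `Q` is generated by the image
  of `τ`, which satisfies `τ ^ m = 1`. So `Q` is finite (`finite_of_center`), and `N ≤ H` has finite
  index.
-/

open Matrix

/-- The standard symplectic form `J = (0, I_n; −I_n, 0)` as a block matrix. -/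
def Jstd (n : ℕ) : Matrix (Fin n ⊕ Fin n) (Fin n ⊕ Fin n) ℤ :=
  Matrix.fromBlocks 0 1 (-1) 0

/-- The integral symplectic group `Sp_{2n}(ℤ)`: invertible `2n × 2n` integer matrices `g`
with `gᵀ * J * g = J`. -/
def SpZ (n : ℕ) : Subgroup (GL (Fin n ⊕ Fin n) ℤ) where
  carrier := {g | (g.val)ᵀ * Jstd n * g.val = Jstd n}
  one_mem' := by simp
  mul_mem' := by
    intro a b ha hb
    simp only [Set.mem_setOf_eq, Units.val_mul, Matrix.transpose_mul] at *
    calc (b.val)ᵀ * (a.val)ᵀ * Jstd n * (a.val * b.val)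
        = (b.val)ᵀ * ((a.val)ᵀ * Jstd n * a.val) * b.val := by
          simp only [Matrix.mul_assoc]
      _ = (b.val)ᵀ * Jstd n * b.val := by rw [ha]
      _ = Jstd n := hb
  inv_mem' := by
    intro a ha
    simp only [Set.mem_setOf_eq] at *
    have hmul : a.val * (a⁻¹).val = 1 := by
      rw [← Units.val_mul, mul_inv_cancel, Units.val_one]
    calc ((a⁻¹).val)ᵀ * Jstd n * (a⁻¹).val
        = ((a⁻¹).val)ᵀ * ((a.val)ᵀ * Jstd n * a.val) * (a⁻¹).val := by rw [ha]
      _ = (a.val * (a⁻¹).val)ᵀ * Jstd n * (a.val * (a⁻¹).val) := by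
          rw [Matrix.transpose_mul]; simp only [Matrix.mul_assoc]
      _ = Jstd n := by rw [hmul]; simp

/-! ### The symplectic form and the action on `ℤ²ⁿ` -/

/-- The standard symplectic form `ω(x, y) = xᵀ J y` on `ℤ²ⁿ`. -/
def om {n : ℕ} (x y : Fin n ⊕ Fin n → ℤ) : ℤ := x ⬝ᵥ (Jstd n *ᵥ y)

/-- The natural action of `Sp_{2n}(ℤ)` on `ℤ²ⁿ`. -/
def act {n : ℕ} (g : SpZ n) (x : Fin n ⊕ Fin n → ℤ) : Fin n ⊕ Fin n → ℤ := g.1.val *ᵥ x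

section Basic

variable {n : ℕ}

lemma om_eq (x y : Fin n ⊕ Fin n → ℤ) :
    om x y = ∑ i, (x (.inl i) * y (.inr i) - x (.inr i) * y (.inl i)) := by
  simp [om, Jstd, dotProduct, Fintype.sum_sum_type, fromBlocks_mulVec, neg_mulVec,
    sub_eq_add_neg, Finset.sum_add_distrib]

lemma om_add_left (x y z : Fin n ⊕ Fin n → ℤ) : om (x + y) z = om x z + om y z := by
  simp [om, add_dotProduct]

lemma om_add_right (x y z : Fin n ⊕ Fin n → ℤ) : om x (y + z) = om x y + om x z := by
  simp [om, mulVec_add, dotProduct_add]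

lemma om_smul_left (c : ℤ) (x y : Fin n ⊕ Fin n → ℤ) : om (c • x) y = c * om x y := by
  rw [om, smul_dotProduct, smul_eq_mul, om]

lemma om_smul_right (c : ℤ) (x y : Fin n ⊕ Fin n → ℤ) : om x (c • y) = c * om x y := by
  rw [om, mulVec_smul, dotProduct_smul, smul_eq_mul, om]

lemma om_neg_left (x y : Fin n ⊕ Fin n → ℤ) : om (-x) y = - om x y := by
  simp [om]

lemma om_neg_right (x y : Fin n ⊕ Fin n → ℤ) : om x (-y) = - om x y := by
  simp [om, mulVec_neg]

lemma om_sub_left (x y z : Fin n ⊕ Fin n → ℤ) : om (x - y) z = om x z - om y z := by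
  simp [om, sub_dotProduct]

lemma om_zero_left (x : Fin n ⊕ Fin n → ℤ) : om 0 x = 0 := by
  simp [om]

lemma om_zero_right (x : Fin n ⊕ Fin n → ℤ) : om x 0 = 0 := by
  simp [om]

lemma om_swap (x y : Fin n ⊕ Fin n → ℤ) : om y x = - om x y := by
  rw [om_eq, om_eq, ← Finset.sum_neg_distrib]
  exact Finset.sum_congr rfl fun i _ => by ring

lemma om_self (x : Fin n ⊕ Fin n → ℤ) : om x x = 0 := by
  have := om_swap x x
  omega

lemma act_mul (g h : SpZ n) (x : Fin n ⊕ Fin n → ℤ) : act (g * h) x = act g (act h x) := by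
  simp [act, mulVec_mulVec]

lemma act_one (x : Fin n ⊕ Fin n → ℤ) : act 1 x = x := by simp [act]

lemma act_add (g : SpZ n) (x y : Fin n ⊕ Fin n → ℤ) : act g (x + y) = act g x + act g y := by
  simp [act, mulVec_add]

lemma act_smul (g : SpZ n) (c : ℤ) (x : Fin n ⊕ Fin n → ℤ) : act g (c • x) = c • act g x := by
  rw [act, mulVec_smul, act]

lemma act_inv_act (g : SpZ n) (x : Fin n ⊕ Fin n → ℤ) : act g⁻¹ (act g x) = x := by
  rw [← act_mul, inv_mul_cancel, act_one]

lemma act_act_inv (g : SpZ n) (x : Fin n ⊕ Fin n → ℤ) : act g (act g⁻¹ x) = x := by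
  rw [← act_mul, mul_inv_cancel, act_one]

lemma act_inv_eq {g : SpZ n} {x y : Fin n ⊕ Fin n → ℤ} (h : act g x = y) : act g⁻¹ y = x := by
  rw [← h, act_inv_act]

lemma act_om (g : SpZ n) (x y : Fin n ⊕ Fin n → ℤ) : om (act g x) (act g y) = om x y := by
  have h : (g.1.val)ᵀ * Jstd n * g.1.val = Jstd n := g.2
  conv_rhs => rw [om, ← h]
  simp only [om, act, ← mulVec_mulVec]
  rw [dotProduct_mulVec x, vecMul_transpose]

lemma sp_ext {g h : SpZ n} (H : ∀ x, act g x = act h x) : g = h := by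
  apply Subtype.ext
  apply Units.ext
  exact Matrix.ext_of_mulVec_single fun i => H _

/-! ### Transvections -/

/-- The matrix of the transvection `x ↦ x + t ω(u, x) u`. -/
def Tmat (u : Fin n ⊕ Fin n → ℤ) (t : ℤ) : Matrix (Fin n ⊕ Fin n) (Fin n ⊕ Fin n) ℤ :=
  1 + t • vecMulVec u (u ᵥ* Jstd n)

lemma Tmat_mulVec (u : Fin n ⊕ Fin n → ℤ) (t : ℤ) (x : Fin n ⊕ Fin n → ℤ) :
    Tmat u t *ᵥ x = x + (t * om u x) • u := by
  rw [Tmat, add_mulVec, one_mulVec, smul_mulVec, vecMulVec_mulVec, ← dotProduct_mulVec]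
  ext i
  simp [om]
  ring

lemma Tmat_mul (u : Fin n ⊕ Fin n → ℤ) (s t : ℤ) : Tmat u s * Tmat u t = Tmat u (s + t) := by
  apply Matrix.ext_of_mulVec_single
  intro i
  simp only [← mulVec_mulVec, Tmat_mulVec, om_add_right, om_smul_right, om_self]
  module

lemma Tmat_zero (u : Fin n ⊕ Fin n → ℤ) : Tmat u 0 = 1 := by simp [Tmat]

/-- The symplectic transvection `x ↦ x + t ω(u, x) u`, as an element of `Sp_{2n}(ℤ)`. -/
def T (u : Fin n ⊕ Fin n → ℤ) (t : ℤ) : SpZ n :=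
  ⟨⟨Tmat u t, Tmat u (-t), by rw [Tmat_mul, add_neg_cancel, Tmat_zero],
      by rw [Tmat_mul, neg_add_cancel, Tmat_zero]⟩, by
    change (Tmat u t)ᵀ * Jstd n * Tmat u t = Jstd n
    apply Matrix.ext_of_mulVec_single
    intro i
    refine dotProduct_eq _ _ fun w => ?_
    rw [dotProduct_comm, dotProduct_comm _ w]
    have h : om (Tmat u t *ᵥ w) (Tmat u t *ᵥ Pi.single i 1) = om w (Pi.single i 1) := by
      simp only [Tmat_mulVec, om_add_right, om_smul_right, om_add_left, om_smul_left, om_self,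
        om_swap u w]
      ring
    simp only [om] at h
    rw [← h]
    simp only [← mulVec_mulVec]
    rw [dotProduct_mulVec w, vecMul_transpose]⟩

lemma act_T (u : Fin n ⊕ Fin n → ℤ) (t : ℤ) (x : Fin n ⊕ Fin n → ℤ) :
    act (T u t) x = x + (t * om u x) • u := Tmat_mulVec u t x

lemma T_mul (u : Fin n ⊕ Fin n → ℤ) (s t : ℤ) : T u s * T u t = T u (s + t) :=
  Subtype.ext (Units.ext (Tmat_mul u s t))

lemma T_zero (u : Fin n ⊕ Fin n → ℤ) : T u 0 = 1 :=
  Subtype.ext (Units.ext (Tmat_zero u))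

lemma T_inv (u : Fin n ⊕ Fin n → ℤ) (t : ℤ) : (T u t)⁻¹ = T u (-t) := by
  rw [inv_eq_iff_mul_eq_one, T_mul, add_neg_cancel, T_zero]

lemma T_pow (u : Fin n ⊕ Fin n → ℤ) (t : ℤ) (m : ℕ) : T u t ^ m = T u (m * t) := by
  induction m with
  | zero => simp [T_zero]
  | succ k ih => rw [pow_succ, ih, T_mul]; congr 1; push_cast; ring

lemma T_one_zpow (u : Fin n ⊕ Fin n → ℤ) (t : ℤ) : T u t = T u 1 ^ t := by
  obtain ⟨m, rfl | rfl⟩ := t.eq_nat_or_neg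
  · rw [zpow_natCast, T_pow, mul_one]
  · rw [_root_.zpow_neg, zpow_natCast, T_pow, T_inv, mul_one]

lemma T_smul (c : ℤ) (u : Fin n ⊕ Fin n → ℤ) (t : ℤ) : T (c • u) t = T u (c ^ 2 * t) := by
  apply sp_ext
  intro x
  simp only [act_T, om_smul_left]
  module

lemma T_conj (g : SpZ n) (u : Fin n ⊕ Fin n → ℤ) (t : ℤ) :
    g * T u t * g⁻¹ = T (act g u) t := by
  apply sp_ext
  intro x
  rw [act_mul, act_mul, act_T, act_T, act_add, act_smul, act_act_inv]
  congr 3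
  rw [← act_om g, act_act_inv]

/-- For `ω(u, v) = 0` this is the transvection `x ↦ x + t (ω(u, x) v + ω(v, x) u)`. -/
def E (u v : Fin n ⊕ Fin n → ℤ) (t : ℤ) : SpZ n := T (u + v) t * T u (-t) * T v (-t)

lemma act_E {u v : Fin n ⊕ Fin n → ℤ} (h : om u v = 0) (t : ℤ) (x : Fin n ⊕ Fin n → ℤ) :
    act (E u v t) x = x + (t * om u x) • v + (t * om v x) • u := by
  have h' : om v u = 0 := by rw [om_swap, h, neg_zero]
  simp only [E, act_mul, act_T, om_add_left, om_add_right, om_smul_right, om_self, h, h']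
  module

lemma E_mem {K : Subgroup (SpZ n)} {u v : Fin n ⊕ Fin n → ℤ} {t : ℤ} (h₁ : T (u + v) t ∈ K)
    (h₂ : T u t ∈ K) (h₃ : T v t ∈ K) : E u v t ∈ K := by
  rw [E, ← T_inv, ← T_inv]
  exact K.mul_mem (K.mul_mem h₁ (K.inv_mem h₂)) (K.inv_mem h₃)

end Basic

/-! ### Moving a vector to a standard vector -/

section Orbit

variable {n : ℕ}

/-- `(e, f, r, s)` is a symplectic quadruple: two orthogonal hyperbolic pairs `(e, f)`, `(r, s)`. -/
structure Quad (e f r s : Fin n ⊕ Fin n → ℤ) : Prop where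
  ef : om e f = 1
  rs : om r s = 1
  er : om e r = 0
  es : om e s = 0
  fr : om f r = 0
  fs : om f s = 0

/-- A combination `a e + b f + g r` with `a`, `g` coprime, `a ≡ 1` and `g ≡ 0` mod `m²`, and
`b ≡ 0` mod `m`, can be moved to `e` by transvections of level `m`. Coprimality allows the
coefficients of `f` and `s` to be changed from `(b, 0)` to `(0, m)` by a unipotent of Siegel type
for the Lagrangian `⟨f, s⟩`; the coefficient `m` of `s` then serves to clear `g` and `a - 1`. -/
lemma exists_act_eq_of_coprime {W : Submodule ℤ (Fin n ⊕ Fin n → ℤ)} {N : Subgroup (SpZ n)}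
    {m : ℤ} (hN : ∀ u ∈ W, ∀ t, T u (m * t) ∈ N) {e f r s : Fin n ⊕ Fin n → ℤ}
    (he : e ∈ W) (hf : f ∈ W) (hr : r ∈ W) (hs : s ∈ W) (H : Quad e f r s) {a b g p q : ℤ}
    (hpq : p * a + q * g = 1) (ha : m * m ∣ a - 1) (hb : m ∣ b) (hg : m * m ∣ g) :
    ∃ h ∈ N, act h (a • e + b • f + g • r) = e := by
  obtain ⟨Hef, Hrs, Her, Hes, Hfr, Hfs⟩ := H
  have Hfe : om f e = -1 := by rw [om_swap, Hef]
  have Hsr : om s r = -1 := by rw [om_swap, Hrs]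
  have Hre : om r e = 0 := by rw [om_swap, Her, neg_zero]
  have Hse : om s e = 0 := by rw [om_swap, Hes, neg_zero]
  have Hrf : om r f = 0 := by rw [om_swap, Hfr, neg_zero]
  have Hsf : om s f = 0 := by rw [om_swap, Hfs, neg_zero]
  have hE : ∀ u ∈ W, ∀ v ∈ W, ∀ t, E u v (m * t) ∈ N := fun u hu v hv t =>
    E_mem (hN _ (W.add_mem hu hv) t) (hN _ hu t) (hN _ hv t)
  obtain ⟨b₀, rfl⟩ := hb
  -- `β a + γ g = -1` and `α a + β g = b₀`
  obtain ⟨α, β, γ, h₁, h₂⟩ : ∃ α β γ : ℤ, β * a + γ * g = -1 ∧ α * a + β * g = b₀ := by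
    refine ⟨(b₀ + p * g) * (2 * p - p ^ 2 * a), -p + g * (q ^ 2 * (b₀ + p * g)),
      -q - a * (q ^ 2 * (b₀ + p * g)), ?_, ?_⟩
    · linear_combination -hpq
    · linear_combination (q * g + 1 - p * a) * (b₀ + p * g) * hpq
  obtain ⟨g₀, hg₀⟩ := hg
  obtain ⟨a₀, ha₀⟩ := ha
  have step₁ : act (T s (m * γ) * E f s (m * β) * T f (m * α)) (a • e + (m * b₀) • f + g • r)
      = a • e + g • r + m • s := by
    have : act (T s (m * γ) * E f s (m * β) * T f (m * α)) (a • e + (m * b₀) • f + g • r)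
        = a • e + (m * (b₀ - (α * a + β * g))) • f + g • r + (-m * (β * a + γ * g)) • s := by
      simp only [act_mul, act_T, act_E Hfs, om_add_right, om_smul_right, om_self, *]
      module
    rw [this, h₁, h₂]
    module
  have step₂ : act (T r (m * -g₀)) (a • e + g • r + m • s) = a • e + m • s := by
    simp only [act_T, om_add_right, om_smul_right, om_self, *]
    module
  have step₃ : act (E e r (m * -a₀)) (a • e + m • s) = e + m • s := by
    simp only [act_E Her, om_add_right, om_smul_right, om_self, *]
    rw [show a = 1 + m * m * a₀ by linear_combination ha₀]
    module
  have step₄ : act (E f s (m * 1)) (e + m • s) = e := by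
    simp only [act_E Hfs, om_add_right, om_smul_right, om_self, *]
    module
  refine ⟨E f s (m * 1) * E e r (m * -a₀) * T r (m * -g₀) *
    (T s (m * γ) * E f s (m * β) * T f (m * α)), ?_, ?_⟩
  · exact N.mul_mem (N.mul_mem (N.mul_mem (hE f hf s hs _) (hE e he r hr _)) (hN r hr _))
      (N.mul_mem (N.mul_mem (hN s hs _) (hE f hf s hs _)) (hN f hf _))
  · rw [act_mul, step₁, act_mul, step₂, act_mul, step₃, step₄]

/-- If `(a, b, g)` is unimodular, `g ≠ 0` and `a` is prime to `m`, then `a` can be made prime to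
`g` by adding a multiple of `m b`. -/
lemma exists_coprime_add {a b g m x y z : ℤ} (hg : g ≠ 0) (h : x * a + y * b + z * g = 1)
    (hm : IsCoprime a m) : ∃ t : ℤ, IsCoprime (a + m * t * b) g := by
  classical
  -- `t` is the product of the primes dividing `g` but not `a`
  let S : Finset ℕ := g.natAbs.primeFactors.filter fun p => ¬ ((p : ℤ) ∣ a)
  refine ⟨((∏ p ∈ S, p : ℕ) : ℤ), ?_⟩
  rw [Int.isCoprime_iff_gcd_eq_one]
  by_contra hne
  obtain ⟨p, hp, hpd⟩ := Nat.exists_prime_and_dvd hne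
  have hpp : Prime (p : ℤ) := Nat.prime_iff_prime_int.mp hp
  have h1 : (p : ℤ) ∣ a + m * ((∏ p ∈ S, p : ℕ) : ℤ) * b :=
    (Int.natCast_dvd_natCast.mpr hpd).trans (Int.gcd_dvd_left _ _)
  have h2 : (p : ℤ) ∣ g := (Int.natCast_dvd_natCast.mpr hpd).trans (Int.gcd_dvd_right _ _)
  have hpg : p ∈ g.natAbs.primeFactors :=
    Nat.mem_primeFactors.mpr ⟨hp, Int.natCast_dvd.mp h2, by simpa using hg⟩
  by_cases hpa : (p : ℤ) ∣ a
  · have h3 := (Int.dvd_add_right hpa).mp h1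
    rcases hpp.dvd_or_dvd h3 with h4 | h4
    · rcases hpp.dvd_or_dvd h4 with h5 | h5
      · obtain ⟨c, d, hcd⟩ := hm
        exact hpp.not_isUnit (isUnit_of_dvd_one
          (hcd ▸ dvd_add (hpa.mul_left c) (h5.mul_left d)))
      · rw [Int.natCast_dvd_natCast, Prime.dvd_finsetProd_iff hp.prime] at h5
        obtain ⟨l, hl, hpl⟩ := h5
        rw [Finset.mem_filter, Nat.mem_primeFactors] at hl
        rw [Nat.prime_dvd_prime_iff_eq hp hl.1.1] at hpl
        subst hpl
        exact hl.2 hpa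
    · exact hpp.not_isUnit (isUnit_of_dvd_one
        (h ▸ dvd_add (dvd_add (hpa.mul_left x) (h4.mul_left y)) (h2.mul_left z)))
  · have h5 : (p : ℤ) ∣ ((∏ p ∈ S, p : ℕ) : ℤ) :=
      Int.natCast_dvd_natCast.mpr
        (Finset.dvd_prod_of_mem (fun p : ℕ => p) (Finset.mem_filter.mpr ⟨hpg, hpa⟩))
    exact hpa ((Int.dvd_add_left ((h5.mul_left m).mul_right b)).mp h1)

/-- A vector of the form `a e + b f + g r` with `g ≠ 0` that is unimodular and
congruent to `e` mod `m²` can be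
moved to `e` by transvections of level `m`. -/
lemma exists_act_eq_of_ne_zero {N : Subgroup (SpZ n)} {m : ℤ} (hN : ∀ u t, T u (m * t) ∈ N)
    {e f r s : Fin n ⊕ Fin n → ℤ} (H : Quad e f r s) {a b g x y z : ℤ} (hg₀ : g ≠ 0)
    (h : x * a + y * b + z * g = 1)
    (ha : m * m ∣ a - 1) (hb : m * m ∣ b) (hg : m * m ∣ g) :
    ∃ h ∈ N, act h (a • e + b • f + g • r) = e := by
  have hm : IsCoprime a m := by
    obtain ⟨c, hc⟩ := ha
    exact ⟨1, -m * c, by linear_combination hc⟩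
  obtain ⟨t, p, q, hpq⟩ := exists_coprime_add hg₀ h hm
  have hmb : m ∣ b := (dvd_mul_right m m).trans hb
  have ha' : m * m ∣ a + m * t * b - 1 := by
    rw [add_sub_right_comm]
    exact dvd_add ha (hb.mul_left _)
  obtain ⟨h₁, h₁N, h₁eq⟩ := exists_act_eq_of_coprime (W := ⊤) (fun u _ => hN u) trivial trivial
    trivial trivial H hpq ha' hmb hg
  refine ⟨h₁ * T e (m * t), N.mul_mem h₁N (hN _ _), ?_⟩
  rw [act_mul]
  refine Eq.trans (congrArg (act h₁) ?_) h₁eq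
  simp only [act_T, om_add_right, om_smul_right, om_self, H.ef, H.er]
  module

end Orbit

/-! ### The standard symplectic basis -/

section Generation

variable {n : ℕ}

/-- The first half of the standard symplectic basis. -/
def ve (i : Fin n) : Fin n ⊕ Fin n → ℤ := Pi.single (.inl i) 1

/-- The second half of the standard symplectic basis; `ω(ve i, vf i) = 1`. -/
def vf (i : Fin n) : Fin n ⊕ Fin n → ℤ := Pi.single (.inr i) 1

lemma om_ve_left (i : Fin n) (x : Fin n ⊕ Fin n → ℤ) : om (ve i) x = x (.inr i) := by
  rw [om_eq, Finset.sum_eq_single i]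
  · simp [ve]
  · intro k _ hk
    simp [ve, hk]
  · simp

lemma om_vf_left (i : Fin n) (x : Fin n ⊕ Fin n → ℤ) : om (vf i) x = - x (.inl i) := by
  rw [om_eq, Finset.sum_eq_single i]
  · simp [vf]
  · intro k _ hk
    simp [vf, hk]
  · simp

lemma om_ve_right (i : Fin n) (x : Fin n ⊕ Fin n → ℤ) : om x (ve i) = - x (.inr i) := by
  rw [om_swap, om_ve_left]

lemma om_vf_right (i : Fin n) (x : Fin n ⊕ Fin n → ℤ) : om x (vf i) = x (.inl i) := by
  rw [om_swap, om_vf_left, neg_neg]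

lemma om_ve_vf (i : Fin n) : om (ve i) (vf i) = 1 := by simp [om_ve_left, vf]

/-- The span of the hyperbolic planes `⟨ve i, vf i⟩` with `j ≤ i`. -/
def Wsub (n j : ℕ) : Submodule ℤ (Fin n ⊕ Fin n → ℤ) where
  carrier := {x | ∀ i : Fin n, i.1 < j → x (.inl i) = 0 ∧ x (.inr i) = 0}
  zero_mem' := fun _ _ => ⟨rfl, rfl⟩
  add_mem' := fun {x y} hx hy i hi => by
    simp [(hx i hi).1, (hx i hi).2, (hy i hi).1, (hy i hi).2]
  smul_mem' := fun c x hx i hi => by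
    simp [(hx i hi).1, (hx i hi).2]

lemma mem_Wsub {j : ℕ} {x : Fin n ⊕ Fin n → ℤ} :
    x ∈ Wsub n j ↔ ∀ i : Fin n, i.1 < j → x (.inl i) = 0 ∧ x (.inr i) = 0 := Iff.rfl

lemma ve_mem {j : ℕ} {i : Fin n} (h : j ≤ i.1) : ve i ∈ Wsub n j := by
  intro k hk
  have : k ≠ i := by rintro rfl; omega
  simp [ve, this]

lemma vf_mem {j : ℕ} {i : Fin n} (h : j ≤ i.1) : vf i ∈ Wsub n j := by
  intro k hk
  have : k ≠ i := by rintro rfl; omega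
  simp [vf, this]

lemma Wsub_succ_le {j : ℕ} : Wsub n (j + 1) ≤ Wsub n j := fun _ hx i hi => hx i (by omega)

lemma om_ve_Wsub {j : ℕ} {x : Fin n ⊕ Fin n → ℤ} (hx : x ∈ Wsub n j) {i : Fin n} (hi : i.1 < j) :
    om (ve i) x = 0 := by rw [om_ve_left, (hx i hi).2]

lemma om_vf_Wsub {j : ℕ} {x : Fin n ⊕ Fin n → ℤ} (hx : x ∈ Wsub n j) {i : Fin n} (hi : i.1 < j) :
    om (vf i) x = 0 := by rw [om_vf_left, (hx i hi).1, neg_zero]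

lemma exists_decomp {j : Fin n} {x : Fin n ⊕ Fin n → ℤ} (hx : x ∈ Wsub n j) :
    ∃ w ∈ Wsub n (j + 1), x = x (.inl j) • ve j + x (.inr j) • vf j + w := by
  refine ⟨x - (x (.inl j) • ve j + x (.inr j) • vf j), ?_, by abel⟩
  intro i hi
  by_cases hij : i = j
  · subst hij
    simp [ve, vf]
  · have : i.1 < j.1 := by
      have : i.1 ≠ j.1 := fun h => hij (Fin.ext h)
      omega
    simp [ve, vf, hx i this, hij]

/-- Every nonzero vector of `Wsub n j` is a multiple of a member of a hyperbolic pair in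
`Wsub n j`. -/
lemma exists_primitive {j : ℕ} {w : Fin n ⊕ Fin n → ℤ} (hw : w ∈ Wsub n j) (h0 : w ≠ 0) :
    ∃ g : ℤ, ∃ r ∈ Wsub n j, ∃ s ∈ Wsub n j, g ≠ 0 ∧ om r s = 1 ∧ w = g • r := by
  -- `g` generates the ideal of values `ω(w, s)`
  let L : (Fin n ⊕ Fin n → ℤ) →ₗ[ℤ] ℤ :=
    { toFun := om w, map_add' := om_add_right w, map_smul' := fun c x => om_smul_right c w x }
  obtain ⟨g, hg⟩ := IsPrincipalIdealRing.principal (Submodule.map L (Wsub n j) : Ideal ℤ)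
  have hdvd : ∀ x ∈ Wsub n j, g ∣ om w x := fun x hx => by
    have : L x ∈ Submodule.map L (Wsub n j) := Submodule.mem_map_of_mem hx
    rw [hg] at this
    exact Ideal.mem_span_singleton.mp this
  obtain ⟨s, hs, hsg⟩ : ∃ s ∈ Wsub n j, om w s = g := by
    have : g ∈ Submodule.map L (Wsub n j) := hg ▸ Submodule.mem_span_singleton_self g
    exact this
  have hcoord : ∀ i, g ∣ w i := by
    rintro (i | i)
    · by_cases hi : i.1 < j
      · rw [(hw i hi).1]; exact dvd_zero g
      · have := hdvd _ (vf_mem (Nat.le_of_not_lt hi))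
        rwa [om_vf_right] at this
    · by_cases hi : i.1 < j
      · rw [(hw i hi).2]; exact dvd_zero g
      · have := hdvd _ (ve_mem (Nat.le_of_not_lt hi))
        rwa [om_ve_right, dvd_neg] at this
  choose r hr using hcoord
  have hwr : w = g • r := funext hr
  have hg0 : g ≠ 0 := by
    rintro rfl
    exact h0 (by rw [hwr, zero_smul])
  refine ⟨g, r, ?_, s, hs, hg0, ?_, hwr⟩
  · intro i hi
    have h1 := hr (.inl i)
    have h2 := hr (.inr i)
    rw [(hw i hi).1] at h1
    rw [(hw i hi).2] at h2
    exact ⟨(mul_eq_zero.mp h1.symm).resolve_left hg0, (mul_eq_zero.mp h2.symm).resolve_left hg0⟩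
  · rw [hwr, om_smul_left] at hsg
    exact mul_left_cancel₀ hg0 (by rw [hsg, mul_one])

lemma quad_of_mem {j : Fin n} {r s : Fin n ⊕ Fin n → ℤ} (hr : r ∈ Wsub n (j + 1))
    (hs : s ∈ Wsub n (j + 1)) (h : om r s = 1) : Quad (ve j) (vf j) r s :=
  ⟨om_ve_vf j, h, om_ve_Wsub hr (Nat.lt_succ_self _), om_ve_Wsub hs (Nat.lt_succ_self _),
    om_vf_Wsub hr (Nat.lt_succ_self _), om_vf_Wsub hs (Nat.lt_succ_self _)⟩

/-! ### Transvections generate `Sp_{2n}(ℤ)` -/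

/-- The subgroup generated by the transvections along vectors of `Wsub n j`. -/
def Tgrp (n j : ℕ) : Subgroup (SpZ n) :=
  Subgroup.closure {g | ∃ u ∈ Wsub n j, ∃ t : ℤ, g = T u t}

lemma T_mem_Tgrp {j : ℕ} {u : Fin n ⊕ Fin n → ℤ} (hu : u ∈ Wsub n j) (t : ℤ) :
    T u t ∈ Tgrp n j := Subgroup.subset_closure ⟨u, hu, t, rfl⟩

lemma E_mem_Tgrp {j : ℕ} {u v : Fin n ⊕ Fin n → ℤ} (hu : u ∈ Wsub n j) (hv : v ∈ Wsub n j)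
    (t : ℤ) : E u v t ∈ Tgrp n j :=
  E_mem (T_mem_Tgrp (add_mem hu hv) t) (T_mem_Tgrp hu t) (T_mem_Tgrp hv t)

lemma Tgrp_fix {j : ℕ} {g : SpZ n} (hg : g ∈ Tgrp n j) {x : Fin n ⊕ Fin n → ℤ}
    (hx : ∀ u ∈ Wsub n j, om u x = 0) : act g x = x := by
  induction hg using Subgroup.closure_induction with
  | mem g hg =>
    obtain ⟨u, hu, t, rfl⟩ := hg
    rw [act_T, hx u hu]
    simp
  | one => exact act_one x
  | mul a b _ _ ha hb => rw [act_mul, hb, ha]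
  | inv a _ ha => exact act_inv_eq ha

lemma Tgrp_fix_ve {j : ℕ} {g : SpZ n} (hg : g ∈ Tgrp n j) {i : Fin n} (hi : i.1 < j) :
    act g (ve i) = ve i :=
  Tgrp_fix hg fun u hu => by rw [om_swap, om_ve_Wsub hu hi, neg_zero]

lemma Tgrp_fix_vf {j : ℕ} {g : SpZ n} (hg : g ∈ Tgrp n j) {i : Fin n} (hi : i.1 < j) :
    act g (vf i) = vf i :=
  Tgrp_fix hg fun u hu => by rw [om_swap, om_vf_Wsub hu hi, neg_zero]

/-- If `ω(v, w) = ±1`, a transvection along `w - v` takes `v` to `w`. -/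
lemma exists_act_eq_of_om {j : ℕ} {v w : Fin n ⊕ Fin n → ℤ} (hv : v ∈ Wsub n j)
    (hw : w ∈ Wsub n j) (h : om v w * om v w = 1) : ∃ g ∈ Tgrp n j, act g v = w := by
  refine ⟨T (w - v) (-om v w), T_mem_Tgrp (sub_mem hw hv) _, ?_⟩
  rw [act_T, om_sub_left, om_self, om_swap v w, sub_zero, neg_mul_neg, h, one_smul]
  abel

/-- Transvections along vectors of `Wsub n j` act transitively on the unimodular vectors of
`Wsub n j`. The Euclidean algorithm on `ω(ve j, v)` reduces to the case `ω(ve j, v) = 0`. -/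
lemma Tgrp_transitive {j : Fin n} {v w : Fin n ⊕ Fin n → ℤ} (hv : v ∈ Wsub n j)
    (hw : w ∈ Wsub n j) (h : om v w = 1) : ∃ g ∈ Tgrp n j, act g v = ve j := by
  induction hd : (om (ve j) v).natAbs using Nat.strong_induction_on generalizing v w with
  | _ d ih =>
  subst hd
  have hej : ve j ∈ Wsub n j := ve_mem le_rfl
  have hfj : vf j ∈ Wsub n j := vf_mem le_rfl
  by_cases hc : om (ve j) v = 0
  · obtain ⟨x, hx, hvx⟩ := exists_decomp hv
    rw [om_ve_left] at hc
    rw [hc, zero_smul, add_zero] at hvx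
    set a := v (.inl j)
    by_cases hx0 : x = 0
    · rw [hx0, add_zero] at hvx
      have h1 : a * om (ve j) w = 1 := by rw [← om_smul_left, ← hvx, h]
      have h2 : a * a = 1 := by
        rcases Int.isUnit_iff.mp (IsUnit.of_mul_eq_one _ h1) with h3 | h3 <;> rw [h3] <;> norm_num
      obtain ⟨g₁, hg₁, h₁⟩ := exists_act_eq_of_om hv hfj
        (by rw [hvx, om_smul_left, om_ve_vf, mul_one, h2])
      obtain ⟨g₂, hg₂, h₂⟩ := exists_act_eq_of_om hfj hej
        (by rw [om_swap, om_ve_vf]; norm_num)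
      exact ⟨g₂ * g₁, mul_mem hg₂ hg₁, by rw [act_mul, h₁, h₂]⟩
    · obtain ⟨g, r, hr, s, hs, -, hrs, rfl⟩ := exists_primitive hx hx0
      have hpq : om (ve j) w * a + om r w * g = 1 := by
        rw [hvx, om_add_left, om_smul_left, om_smul_left] at h
        linear_combination h
      obtain ⟨h₁, h₁m, h₁e⟩ := exists_act_eq_of_coprime (W := Wsub n j) (N := Tgrp n j) (m := 1)
        (b := 0) (fun u hu t => T_mem_Tgrp hu _) hej hfj (Wsub_succ_le hr) (Wsub_succ_le hs)
        (quad_of_mem hr hs hrs) hpq (by simp) (by simp) (by simp)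
      refine ⟨h₁, h₁m, ?_⟩
      rw [zero_smul, add_zero] at h₁e
      exact (congrArg (act h₁) hvx).trans h₁e
  · -- replace `v` by `w - t v`, where `t` is the quotient of `ω(ve j, w)` by `ω(ve j, v)`
    set c := om (ve j) v with hcdef
    set w' := w + (-(om (ve j) w / c)) • v with hw'
    have hw'm : w' ∈ Wsub n j := add_mem hw (Submodule.smul_mem _ _ hv)
    have h1 : om v w' = 1 := by rw [hw', om_add_right, om_smul_right, om_self, h]; ring
    have h2 : om (ve j) w' = om (ve j) w % c := by
      rw [hw', om_add_right, om_smul_right, ← hcdef, Int.emod_def]; ring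
    have hlt : (om (ve j) w').natAbs < c.natAbs := by
      rw [h2]
      have := Int.emod_nonneg (om (ve j) w) hc
      have := Int.emod_lt_abs (om (ve j) w) hc
      rw [Int.abs_eq_natAbs] at this
      omega
    obtain ⟨g₁, hg₁, e₁⟩ := exists_act_eq_of_om hv hw'm (by rw [h1]; norm_num)
    obtain ⟨g₂, hg₂, e₂⟩ := ih _ hlt hw'm (neg_mem hv)
      (by rw [om_neg_right, om_swap, h1, neg_neg]) rfl
    exact ⟨g₂ * g₁, mul_mem hg₂ hg₁, by rw [act_mul, e₁, e₂]⟩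

lemma Tgrp_le {j : ℕ} : Tgrp n j ≤ Tgrp n 0 := by
  refine Subgroup.closure_mono ?_
  rintro _ ⟨u, -, t, rfl⟩
  exact ⟨u, fun i hi => absurd hi (Nat.not_lt_zero _), t, rfl⟩

lemma act_mem_Wsub {j : ℕ} {g : SpZ n}
    (hg : ∀ i : Fin n, i.1 < j → act g (ve i) = ve i ∧ act g (vf i) = vf i)
    {x : Fin n ⊕ Fin n → ℤ} (hx : x ∈ Wsub n j) : act g x ∈ Wsub n j := by
  intro i hi
  have h1 := act_om g (ve i) x
  have h2 := act_om g (vf i) x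
  rw [(hg i hi).1, om_ve_left, om_ve_left, (hx i hi).2] at h1
  rw [(hg i hi).2, om_vf_left, om_vf_left, (hx i hi).1] at h2
  exact ⟨by omega, h1⟩

/-- Descending induction on the number `j` of hyperbolic planes fixed by `g`. -/
lemma mem_Tgrp_of_fix {j : ℕ} (hj : j ≤ n) (g : SpZ n)
    (hg : ∀ i : Fin n, i.1 < j → act g (ve i) = ve i ∧ act g (vf i) = vf i) :
    g ∈ Tgrp n 0 := by
  induction hj using Nat.decreasingInduction generalizing g with
  | self =>
    have : g = 1 := by
      apply Subtype.ext
      apply Units.ext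
      apply Matrix.ext_of_mulVec_single
      rintro (i | i)
      · exact ((hg i i.2).1).trans (act_one _).symm
      · exact ((hg i i.2).2).trans (act_one _).symm
    rw [this]
    exact one_mem _
  | of_succ k hk ih =>
    let j : Fin n := ⟨k, hk⟩
    have hej : ve j ∈ Wsub n k := ve_mem le_rfl
    have hfj : vf j ∈ Wsub n k := vf_mem le_rfl
    obtain ⟨h, hh, he⟩ := Tgrp_transitive (j := j) (act_mem_Wsub hg hej) (act_mem_Wsub hg hfj)
      ((act_om g _ _).trans (om_ve_vf j))
    have hg₁ : ∀ i : Fin n, i.1 < k → act (h * g) (ve i) = ve i ∧ act (h * g) (vf i) = vf i := by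
      intro i hi
      rw [act_mul, act_mul, (hg i hi).1, (hg i hi).2]
      exact ⟨Tgrp_fix_ve hh hi, Tgrp_fix_vf hh hi⟩
    have he₁ : act (h * g) (ve j) = ve j := by rw [act_mul, he]
    obtain ⟨x, hx, hxe⟩ := exists_decomp (j := j) (act_mem_Wsub hg₁ hfj)
    have hone : act (h * g) (vf j) (.inr j) = 1 := by
      have := act_om (h * g) (ve j) (vf j)
      rwa [he₁, om_ve_left, om_ve_vf] at this
    rw [hone] at hxe
    set a := act (h * g) (vf j) (.inl j)
    have hex : om (ve j) x = 0 := om_ve_Wsub hx (Nat.lt_succ_self _)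
    have hfx : om (vf j) x = 0 := om_vf_Wsub hx (Nat.lt_succ_self _)
    have hxe' : om x (ve j) = 0 := by rw [om_swap, hex, neg_zero]
    have hxf' : om x (vf j) = 0 := by rw [om_swap, hfx, neg_zero]
    have hk' : T (ve j) (-a) * E (ve j) x (-1) ∈ Tgrp n k :=
      mul_mem (T_mem_Tgrp hej _) (E_mem_Tgrp hej (Wsub_succ_le hx) _)
    have key := ih (T (ve j) (-a) * E (ve j) x (-1) * (h * g)) ?_
    · have hh' := (mul_mem_cancel_left (Tgrp_le hk')).mp key
      exact (mul_mem_cancel_left (Tgrp_le hh)).mp hh'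
    · intro i hi
      rcases Nat.lt_succ_iff_lt_or_eq.mp hi with hi' | hi'
      · constructor
        · rw [act_mul, (hg₁ i hi').1]
          exact Tgrp_fix_ve hk' hi'
        · rw [act_mul, (hg₁ i hi').2]
          exact Tgrp_fix_vf hk' hi'
      · obtain rfl : i = j := Fin.ext hi'
        constructor
        · rw [act_mul, he₁, act_mul]
          simp only [act_T, act_E hex, om_add_right, om_smul_right, om_self, hex, hxe']
          module
        · rw [act_mul, hxe, act_mul]
          simp only [act_T, act_E hex, om_add_right, om_smul_right, om_self, om_ve_vf, hex, hxe',
            hxf']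
          module

lemma Tgrp_zero_eq_top : Tgrp n 0 = ⊤ :=
  (Subgroup.eq_top_iff' _).mpr fun g =>
    mem_Tgrp_of_fix (Nat.zero_le n) g fun _ hi => absurd hi (Nat.not_lt_zero _)

/-- `Sp_{2n}(ℤ)` is the normal closure of a single transvection. -/
lemma normalClosure_eq_top (j : Fin n) (hj : j.1 = 0) :
    Subgroup.normalClosure {T (ve j) 1} = ⊤ := by
  rw [← top_le_iff, ← Tgrp_zero_eq_top]
  refine (Subgroup.closure_le _).mpr ?_
  rintro _ ⟨u, hu, t, rfl⟩
  change T u t ∈ Subgroup.normalClosure {T (ve j) 1}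
  by_cases hu0 : u = 0
  · have : T u t = 1 := sp_ext fun x => by simp [act_T, hu0, act_one]
    rw [this]
    exact one_mem _
  obtain ⟨c, r, hr, s, hs, -, hrs, rfl⟩ := exists_primitive hu hu0
  have hr' : r ∈ Wsub n j.1 := by rwa [hj]
  have hs' : s ∈ Wsub n j.1 := by rwa [hj]
  obtain ⟨g, -, hg⟩ := Tgrp_transitive hr' hs' hrs
  have h1 : T (c • r) t = g⁻¹ * T (ve j) 1 ^ (c ^ 2 * t) * g⁻¹⁻¹ := by
    rw [← T_one_zpow, T_conj, act_inv_eq hg, T_smul]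
  rw [h1]
  have h2 : T (ve j) 1 ∈ Subgroup.normalClosure {T (ve j) 1} :=
    Subgroup.subset_normalClosure (Set.mem_singleton _)
  exact Subgroup.normalClosure_normal.conj_mem _ (zpow_mem h2 _) _

end Generation

/-! ### The subgroup of the theorem contains all transvections of level `k ^ 6` -/

section Level

variable {n : ℕ}

lemma T_add {u v : Fin n ⊕ Fin n → ℤ} (h : om u v = 0) (t : ℤ) :
    T (u + v) t = T u t * T v t * E u v t := by
  have h' : om v u = 0 := by rw [om_swap, h, neg_zero]
  apply sp_ext
  intro x
  simp only [act_mul, act_T, act_E h, om_add_left, om_add_right, om_smul_right, om_self, h, h']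
  module

lemma E_symm (u v : Fin n ⊕ Fin n → ℤ) (h : om u v = 0) (t : ℤ) : E u v t = E v u t := by
  have h' : om v u = 0 := by rw [om_swap, h, neg_zero]
  apply sp_ext
  intro x
  rw [act_E h, act_E h']
  abel

lemma E_smul_right {u v : Fin n ⊕ Fin n → ℤ} (h : om u v = 0) (c t : ℤ) :
    E u (c • v) t = E u v (c * t) := by
  have h' : om u (c • v) = 0 := by rw [om_smul_right, h, mul_zero]
  apply sp_ext
  intro x
  rw [act_E h, act_E h', om_smul_left]
  module

lemma E_add_right {u v w : Fin n ⊕ Fin n → ℤ} (hv : om u v = 0) (hw : om u w = 0) (t : ℤ) :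
    E u (v + w) t = E u v t * E u w t * T u (-(t * t * om v w)) := by
  have hvw : om u (v + w) = 0 := by rw [om_add_right, hv, hw, add_zero]
  have hv' : om v u = 0 := by rw [om_swap, hv, neg_zero]
  have hw' : om w u = 0 := by rw [om_swap, hw, neg_zero]
  apply sp_ext
  intro x
  simp only [act_mul, act_T, act_E hv, act_E hw, act_E hvw, om_add_left, om_add_right,
    om_smul_right, om_self, hw, hv', hw']
  module

lemma om_ve_ve (i j : Fin n) : om (ve i) (ve j) = 0 := by rw [om_ve_left]; simp [ve]

lemma om_vf_vf (i j : Fin n) : om (vf i) (vf j) = 0 := by rw [om_vf_left]; simp [vf]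

lemma om_ve_vf_of_ne {i j : Fin n} (h : i ≠ j) : om (ve i) (vf j) = 0 := by
  simp [om_ve_left, vf, h]

lemma om_vf_ve_of_ne {i j : Fin n} (h : i ≠ j) : om (vf i) (ve j) = 0 := by
  simp [om_vf_left, ve, h]

/-- The vector `a ve i + b vf i` of the `i`-th hyperbolic plane. -/
def pv (i : Fin n) (a b : ℤ) : Fin n ⊕ Fin n → ℤ := a • ve i + b • vf i

lemma om_pv_ve {i j : Fin n} (h : i ≠ j) (a b : ℤ) : om (pv i a b) (ve j) = 0 := by
  simp only [pv, om_add_left, om_smul_left, om_ve_ve, om_vf_ve_of_ne h, mul_zero, add_zero]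

lemma om_pv_vf {i j : Fin n} (h : i ≠ j) (a b : ℤ) : om (pv i a b) (vf j) = 0 := by
  simp only [pv, om_add_left, om_smul_left, om_vf_vf, om_ve_vf_of_ne h, mul_zero, add_zero]

lemma om_pv_pv {i j : Fin n} (h : i ≠ j) (a b c d : ℤ) : om (pv i a b) (pv j c d) = 0 := by
  rw [pv.eq_def j, om_add_right, om_smul_right, om_smul_right, om_pv_ve h, om_pv_vf h]
  simp

lemma eq_sum_pv (x : Fin n ⊕ Fin n → ℤ) : x = ∑ i, pv i (x (.inl i)) (x (.inr i)) := by
  classical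
  ext (i | i)
  · rw [Finset.sum_apply, Finset.sum_eq_single i]
    · simp [pv, ve, vf]
    · intro j _ hj
      simp [pv, ve, vf, hj.symm]
    · simp
  · rw [Finset.sum_apply, Finset.sum_eq_single i]
    · simp [pv, ve, vf]
    · intro j _ hj
      simp [pv, ve, vf, hj.symm]
    · simp

/-- `H` contains the transvections of level `k` along the vectors of the two standard Lagrangian
summands. -/
structure Lagr (H : Subgroup (SpZ n)) (k : ℤ) : Prop where
  left : ∀ u : Fin n ⊕ Fin n → ℤ, (∀ i, u (.inr i) = 0) → ∀ t, T u (k * t) ∈ H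
  right : ∀ u : Fin n ⊕ Fin n → ℤ, (∀ i, u (.inl i) = 0) → ∀ t, T u (k * t) ∈ H

namespace Lagr

variable {H : Subgroup (SpZ n)} {k : ℤ}

lemma T_ve (hH : Lagr H k) (i : Fin n) (t : ℤ) : T (ve i) (k * t) ∈ H :=
  hH.left _ (by simp [ve]) t

lemma T_vf (hH : Lagr H k) (i : Fin n) (t : ℤ) : T (vf i) (k * t) ∈ H :=
  hH.right _ (by simp [vf]) t

lemma E_ve_ve (hH : Lagr H k) (i j : Fin n) (t : ℤ) : E (ve i) (ve j) (k * t) ∈ H :=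
  E_mem (hH.left _ (by simp [ve]) t) (hH.T_ve i t) (hH.T_ve j t)

lemma E_vf_vf (hH : Lagr H k) (i j : Fin n) (t : ℤ) : E (vf i) (vf j) (k * t) ∈ H :=
  E_mem (hH.right _ (by simp [vf]) t) (hH.T_vf i t) (hH.T_vf j t)

/-- Conjugating `T (vf j) (k t)` by `E (ve i) (ve j) k` gives a transvection along
`vf j + k ve i`. -/
lemma E_vf_ve (hH : Lagr H k) {i j : Fin n} (hij : i ≠ j) (t : ℤ) :
    E (vf j) (ve i) (k ^ 2 * t) ∈ H := by
  have hg : E (ve i) (ve j) (k * 1) ∈ H := hH.E_ve_ve i j 1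
  have h1 : act (E (ve i) (ve j) (k * 1)) (vf j) = vf j + k • ve i := by
    rw [act_E (om_ve_ve i j), om_ve_vf_of_ne hij, om_ve_vf]
    module
  have h2 : T (vf j + k • ve i) (k * t) ∈ H := by
    rw [← h1, ← T_conj]
    exact H.mul_mem (H.mul_mem hg (hH.T_vf j t)) (H.inv_mem hg)
  have h3 : T (k • ve i) (k * t) ∈ H := hH.left _ (by simp [ve]) t
  have h4 := E_mem h2 (hH.T_vf j t) h3
  rw [E_smul_right (om_vf_ve_of_ne hij.symm)] at h4
  convert h4 using 2
  ring

lemma E_ve_pv (hH : Lagr H k) {i j : Fin n} (hij : i ≠ j) (a b t : ℤ) :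
    E (ve j) (pv i a b) (k ^ 2 * t) ∈ H := by
  have h1 : om (ve j) (ve i) = 0 := om_ve_ve j i
  have h2 : om (ve j) (vf i) = 0 := om_ve_vf_of_ne hij.symm
  rw [pv, E_add_right (by rw [om_smul_right, h1, mul_zero]) (by rw [om_smul_right, h2, mul_zero]),
    E_smul_right h1, E_smul_right h2, E_symm _ _ h2]
  refine H.mul_mem (H.mul_mem ?_ ?_) ?_
  · convert hH.E_ve_ve j i (k * a * t) using 2
    ring
  · convert hH.E_vf_ve hij.symm (b * t) using 2
    ring
  · convert hH.T_ve j (-(k ^ 3 * t * t * om (a • ve i) (b • vf i))) using 2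
    ring

lemma E_vf_pv (hH : Lagr H k) {i j : Fin n} (hij : i ≠ j) (a b t : ℤ) :
    E (vf j) (pv i a b) (k ^ 2 * t) ∈ H := by
  have h1 : om (vf j) (ve i) = 0 := om_vf_ve_of_ne hij.symm
  have h2 : om (vf j) (vf i) = 0 := om_vf_vf j i
  rw [pv, E_add_right (by rw [om_smul_right, h1, mul_zero]) (by rw [om_smul_right, h2, mul_zero]),
    E_smul_right h1, E_smul_right h2]
  refine H.mul_mem (H.mul_mem ?_ ?_) ?_
  · convert hH.E_vf_ve hij (a * t) using 2
    ring
  · convert hH.E_vf_vf j i (k * b * t) using 2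
    ring
  · convert hH.T_vf j (-(k ^ 3 * t * t * om (a • ve i) (b • vf i))) using 2
    ring

/-- Conjugating `T (vf j) (k t)` by `E (ve j) p (k ^ 2)`, for `p` in the `i`-th plane, gives a
transvection along `vf j + k ^ 2 p`. -/
lemma T_pv (hH : Lagr H k) {i j : Fin n} (hij : i ≠ j) (a b t : ℤ) :
    T (pv i a b) (k ^ 5 * t) ∈ H := by
  have hej : om (ve j) (pv i a b) = 0 := by rw [om_swap, om_pv_ve hij, neg_zero]
  have hfj : om (vf j) (pv i a b) = 0 := by rw [om_swap, om_pv_vf hij, neg_zero]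
  have hg : E (ve j) (pv i a b) (k ^ 2 * 1) ∈ H := hH.E_ve_pv hij a b 1
  have h1 : act (E (ve j) (pv i a b) (k ^ 2 * 1)) (vf j) = vf j + k ^ 2 • pv i a b := by
    rw [act_E hej, om_pv_vf hij, om_ve_vf]
    module
  have h2 : T (vf j + k ^ 2 • pv i a b) (k * t) ∈ H := by
    rw [← h1, ← T_conj]
    exact H.mul_mem (H.mul_mem hg (hH.T_vf j t)) (H.inv_mem hg)
  rw [T_add (by rw [om_smul_right, hfj, mul_zero]), E_smul_right hfj, T_smul] at h2
  have h3 : E (vf j) (pv i a b) (k ^ 2 * (k * t)) ∈ H := hH.E_vf_pv hij a b _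
  have h4 := (H.mul_mem_cancel_left (hH.T_vf j t)).mp ((H.mul_mem_cancel_right h3).mp h2)
  convert h4 using 2
  ring

lemma E_pv_pv (hH : Lagr H k) {i j : Fin n} (hij : i ≠ j) (a b c d t : ℤ) :
    E (pv i a b) (pv j c d) (k ^ 6 * t) ∈ H := by
  have h1 : om (pv i a b) (ve j) = 0 := om_pv_ve hij a b
  have h2 : om (pv i a b) (vf j) = 0 := om_pv_vf hij a b
  rw [pv.eq_def j, E_add_right (by rw [om_smul_right, h1, mul_zero])
    (by rw [om_smul_right, h2, mul_zero]), E_smul_right h1, E_smul_right h2,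
    E_symm _ _ h1, E_symm _ _ h2]
  refine H.mul_mem (H.mul_mem ?_ ?_) ?_
  · convert hH.E_ve_pv hij a b (k ^ 4 * c * t) using 2
    ring
  · convert hH.E_vf_pv hij a b (k ^ 4 * d * t) using 2
    ring
  · convert hH.T_pv hij a b (-(k ^ 7 * t * t * om (c • ve j) (d • vf j))) using 2
    ring

/-- Induction on the set `S` of hyperbolic planes on which a vector is supported. -/
lemma T_sum (hH : Lagr H k) (hn : 2 ≤ n) (a b : Fin n → ℤ) (S : Finset (Fin n)) :
    (∀ t, T (∑ i ∈ S, pv i (a i) (b i)) (k ^ 6 * t) ∈ H) ∧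
    ∀ j ∉ S, ∀ c d, om (pv j c d) (∑ i ∈ S, pv i (a i) (b i)) = 0 ∧
      ∀ t, E (pv j c d) (∑ i ∈ S, pv i (a i) (b i)) (k ^ 6 * t) ∈ H := by
  classical
  have : Nontrivial (Fin n) := Fin.nontrivial_iff_two_le.mpr hn
  have hT : ∀ (i : Fin n) (c d t : ℤ), T (pv i c d) (k ^ 5 * t) ∈ H := fun i c d t => by
    obtain ⟨j, hj⟩ := exists_ne i
    exact hH.T_pv hj.symm c d t
  induction S using Finset.induction_on with
  | empty =>
    refine ⟨fun t => ?_, fun j _ c d => ⟨by simp [om_zero_right], fun t => ?_⟩⟩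
    · have : T (0 : Fin n ⊕ Fin n → ℤ) (k ^ 6 * t) = 1 :=
        sp_ext fun x => by simp [act_T, act_one]
      rw [Finset.sum_empty, this]
      exact H.one_mem
    · have : E (pv j c d) 0 (k ^ 6 * t) = 1 :=
        sp_ext fun x => by simp [act_E (om_zero_right _), act_one, om_zero_left]
      rw [Finset.sum_empty, this]
      exact H.one_mem
  | insert i S hi ih =>
    obtain ⟨ih1, ih2⟩ := ih
    obtain ⟨ho, hE⟩ := ih2 i hi (a i) (b i)
    rw [Finset.sum_insert hi]
    refine ⟨fun t => ?_, fun j hj c d => ?_⟩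
    · rw [T_add ho]
      refine H.mul_mem (H.mul_mem ?_ (ih1 t)) (hE t)
      convert hT i (a i) (b i) (k * t) using 2
      ring
    · rw [Finset.mem_insert, not_or] at hj
      obtain ⟨ho', hE'⟩ := ih2 j hj.2 c d
      have h0 := om_pv_pv hj.1 c d (a i) (b i)
      refine ⟨by rw [om_add_right, h0, ho', add_zero], fun t => ?_⟩
      rw [E_add_right h0 ho', ho, mul_zero, neg_zero, T_zero, mul_one]
      exact H.mul_mem (hH.E_pv_pv hj.1 c d _ _ t) (hE' t)

lemma T_all (hH : Lagr H k) (hn : 2 ≤ n) (x : Fin n ⊕ Fin n → ℤ) (t : ℤ) :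
    T x (k ^ 6 * t) ∈ H := by
  rw [eq_sum_pv x]
  exact (hH.T_sum hn _ _ Finset.univ).1 t

end Lagr

/-- For `u` in one of the two standard Lagrangian summands, `T u (k t)` is one of the generating
unipotent block matrices. -/
lemma lagr_closure (n k : ℕ) : Lagr (Subgroup.closure
      ({g : SpZ n | ∃ B : Matrix (Fin n) (Fin n) ℤ, Bᵀ = B ∧ (∀ i j, (k : ℤ) ∣ B i j) ∧
          (g : GL (Fin n ⊕ Fin n) ℤ).val = Matrix.fromBlocks 1 B 0 1} ∪
       {g : SpZ n | ∃ C : Matrix (Fin n) (Fin n) ℤ, Cᵀ = C ∧ (∀ i j, (k : ℤ) ∣ C i j) ∧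
          (g : GL (Fin n ⊕ Fin n) ℤ).val = Matrix.fromBlocks 1 0 C 1})) k where
  left u hu t := by
    refine Subgroup.subset_closure (Or.inl ⟨(k * t) • vecMulVec (fun i => u (.inl i))
      (fun i => u (.inl i)), ?_, ?_, ?_⟩)
    · rw [transpose_smul, transpose_vecMulVec]
    · intro i j
      exact ⟨t * (u (.inl i) * u (.inl j)), by simp [vecMulVec_apply]; ring⟩
    · change Tmat u (k * t) = _
      have hJ : ∀ x, (u ᵥ* Jstd n) (.inl x) = 0 ∧ (u ᵥ* Jstd n) (.inr x) = u (.inl x) := by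
        intro x
        simp [Jstd, vecMul, dotProduct, Fintype.sum_sum_type, hu, Matrix.one_apply]
      rw [Tmat]
      ext (i | i) (j | j) <;>
        simp [-zsmul_eq_mul, vecMulVec_apply, hJ, hu, Matrix.one_apply]
  right u hu t := by
    refine Subgroup.subset_closure (Or.inr ⟨(-(k * t)) • vecMulVec (fun i => u (.inr i))
      (fun i => u (.inr i)), ?_, ?_, ?_⟩)
    · rw [transpose_smul, transpose_vecMulVec]
    · intro i j
      exact ⟨-t * (u (.inr i) * u (.inr j)), by simp [vecMulVec_apply]; ring⟩
    · change Tmat u (k * t) = _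
      have hJ : ∀ x, (u ᵥ* Jstd n) (.inl x) = -u (.inr x) ∧ (u ᵥ* Jstd n) (.inr x) = 0 := by
        intro x
        simp [Jstd, vecMul, dotProduct, Fintype.sum_sum_type, hu, Matrix.one_apply]
      rw [Tmat]
      ext (i | i) (j | j) <;>
        simp [-zsmul_eq_mul, vecMulVec_apply, hJ, hu, Matrix.one_apply]

end Level

/-! ### A finiteness criterion for groups -/

section Groups

open scoped commutatorElement

lemma finite_commutatorSet_of_center {Q : Type*} [Group Q] [(Subgroup.center Q).FiniteIndex] :
    Finite (commutatorSet Q) := by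
  have hfin : Finite (Q ⧸ Subgroup.center Q) := Subgroup.finite_quotient_of_finiteIndex
  -- `⁅g, h⁆` only depends on the cosets of `g` and `h` modulo the centre
  refine ((Set.finite_range fun p : (Q ⧸ Subgroup.center Q) × (Q ⧸ Subgroup.center Q) =>
    ⁅p.1.out, p.2.out⁆).subset ?_).to_subtype
  rintro _ ⟨g, h, rfl⟩
  refine ⟨((g : Q ⧸ Subgroup.center Q), (h : Q ⧸ Subgroup.center Q)), ?_⟩
  obtain ⟨⟨z, hz⟩, h1⟩ := QuotientGroup.mk_out_eq_mul (Subgroup.center Q) g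
  obtain ⟨⟨w, hw⟩, h2⟩ := QuotientGroup.mk_out_eq_mul (Subgroup.center Q) h
  rw [Subgroup.mem_center_iff] at hz hw
  change ⁅(g : Q ⧸ Subgroup.center Q).out, (h : Q ⧸ Subgroup.center Q).out⁆ = ⁅g, h⁆
  rw [h1, h2]
  change ⁅g * z, h * w⁆ = ⁅g, h⁆
  simp only [commutatorElement_def, _root_.mul_inv_rev]
  calc g * z * (h * w) * (z⁻¹ * g⁻¹) * (w⁻¹ * h⁻¹)
      = g * (z * (h * w * z⁻¹)) * (g⁻¹ * w⁻¹) * h⁻¹ := by group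
    _ = g * ((h * w * z⁻¹) * z) * (g⁻¹ * w⁻¹) * h⁻¹ := by rw [hz (h * w * z⁻¹)]
    _ = g * h * (w * (g⁻¹ * w⁻¹)) * h⁻¹ := by group
    _ = g * h * ((g⁻¹ * w⁻¹) * w) * h⁻¹ := by rw [hw (g⁻¹ * w⁻¹)]
    _ = g * h * g⁻¹ * h⁻¹ := by group

/-- A group with centre of finite index which is the normal closure of an element of finite order
is finite: its commutator subgroup is finite by Schur's theorem, and its abelianization is cyclic,
generated by the image of that element. -/
lemma finite_of_center {Q : Type*} [Group Q] [(Subgroup.center Q).FiniteIndex] {τ : Q}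
    (hτ : Subgroup.normalClosure {τ} = ⊤) (hfin : IsOfFinOrder τ) : Finite Q := by
  have := finite_commutatorSet_of_center (Q := Q)
  have hnorm : (Subgroup.zpowers τ ⊔ commutator Q).Normal := by
    refine ⟨fun x hx g => ?_⟩
    have h1 : g * x * g⁻¹ = ⁅g, x⁆ * x := by simp [commutatorElement_def]
    rw [h1]
    refine mul_mem (Subgroup.mem_sup_right ?_) hx
    exact Subgroup.commutator_mem_commutator (Subgroup.mem_top g) (Subgroup.mem_top x)
  have htop : Subgroup.zpowers τ ⊔ commutator Q = ⊤ := by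
    rw [← top_le_iff, ← hτ]
    refine Subgroup.normalClosure_le_normal ?_
    rw [Set.singleton_subset_iff]
    exact Subgroup.mem_sup_left (Subgroup.mem_zpowers τ)
  have h1 : (Subgroup.zpowers τ : Set Q).Finite := hfin.finite_zpowers
  have h2 : (commutator Q : Set Q).Finite :=
    Set.finite_coe_iff.mp (inferInstanceAs (Finite (commutator Q)))
  have h3 := h1.mul h2
  rw [← Subgroup.mul_normal, htop, Subgroup.coe_top] at h3
  exact Set.finite_univ_iff.mp h3

/-- If modulo `N` the finite index normal subgroup `K` commutes with `τ`, it is central modulo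
`N`, because the centralizer of a normal subgroup is normal. -/
lemma finiteIndex_of_commute {G : Type*} [Group G] {N K : Subgroup G} [N.Normal] [K.Normal]
    [K.FiniteIndex] {τ : G} (hτ : Subgroup.normalClosure {τ} = ⊤) {m : ℕ} (hm : 0 < m)
    (hτm : τ ^ m ∈ N) (hK : ∀ g ∈ K, (g * τ * g⁻¹) * τ⁻¹ ∈ N) : N.FiniteIndex := by
  let π := QuotientGroup.mk' N
  have hπ : Function.Surjective π := QuotientGroup.mk'_surjective N
  have hKn : (K.map π).Normal := Subgroup.Normal.map inferInstance π hπ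
  have hcomm : ∀ g ∈ K, π g * π τ = π τ * π g := by
    intro g hg
    have h1 : π ((g * τ * g⁻¹) * τ⁻¹) = 1 := (QuotientGroup.eq_one_iff _).mpr (hK g hg)
    rw [map_mul, map_mul, map_mul, map_inv, map_inv] at h1
    rwa [mul_inv_eq_one, mul_inv_eq_iff_eq_mul] at h1
  have hcent : (⊤ : Subgroup G) ≤ (Subgroup.centralizer (K.map π : Set (G ⧸ N))).comap π := by
    rw [← hτ]
    refine Subgroup.normalClosure_le_normal ?_
    rw [Set.singleton_subset_iff]
    change π τ ∈ Subgroup.centralizer (K.map π : Set (G ⧸ N))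
    rw [Subgroup.mem_centralizer_iff]
    rintro _ ⟨g, hg, rfl⟩
    exact hcomm g hg
  have hle : K ≤ (Subgroup.center (G ⧸ N)).comap π := by
    intro g hg
    rw [Subgroup.mem_comap, Subgroup.mem_center_iff]
    intro q
    obtain ⟨x, rfl⟩ := hπ q
    have h1 : π x ∈ Subgroup.centralizer (K.map π : Set (G ⧸ N)) := hcent (Subgroup.mem_top x)
    rw [Subgroup.mem_centralizer_iff] at h1
    exact (h1 (π g) (Subgroup.mem_map_of_mem π hg)).symm
  have hfi : (Subgroup.center (G ⧸ N)).FiniteIndex := by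
    have h1 : ((Subgroup.center (G ⧸ N)).comap π).FiniteIndex := Subgroup.finiteIndex_of_le hle
    refine ⟨?_⟩
    rw [← Subgroup.index_comap_of_surjective _ hπ]
    exact h1.index_ne_zero
  have hord : IsOfFinOrder (π τ) := isOfFinOrder_iff_pow_eq_one.mpr ⟨m, hm, by
    rw [← map_pow]
    exact (QuotientGroup.eq_one_iff _).mpr hτm⟩
  have hclos : Subgroup.normalClosure {π τ} = ⊤ := by
    have h1 := Subgroup.map_normalClosure {τ} π hπ
    rw [hτ, Set.image_singleton, Subgroup.map_top_of_surjective π hπ] at h1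
    exact h1.symm
  have := finite_of_center hclos hord
  exact Subgroup.finiteIndex_of_finite_quotient

end Groups

/-! ### Finite index -/

section FiniteIndex

variable {n : ℕ}

/-- Reduction modulo `M`. -/
def red (n M : ℕ) : SpZ n →* GL (Fin n ⊕ Fin n) (ZMod M) :=
  (Matrix.GeneralLinearGroup.map (Int.castRingHom (ZMod M))).comp (SpZ n).subtype

lemma dvd_of_mem_ker {M : ℕ} {g : SpZ n} (hg : g ∈ (red n M).ker) (x : Fin n ⊕ Fin n → ℤ)
    (i : Fin n ⊕ Fin n) : (M : ℤ) ∣ act g x i - x i := by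
  have h1 : ∀ j, (M : ℤ) ∣ (g.1.val - 1) i j := by
    intro j
    have h2 : (red n M g).val i j = (1 : GL (Fin n ⊕ Fin n) (ZMod M)).val i j := by
      rw [(MonoidHom.mem_ker).mp hg]
    have h3 : ((g.1.val i j : ℤ) : ZMod M) = (1 : Matrix _ _ (ZMod M)) i j := h2
    rw [← ZMod.intCast_zmod_eq_zero_iff_dvd, Matrix.sub_apply, Int.cast_sub, h3,
      Matrix.one_apply, Matrix.one_apply]
    split_ifs <;> simp
  have h4 : act g x i - x i = ((g.1.val - 1) *ᵥ x) i := by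
    rw [sub_mulVec, one_mulVec]
    rfl
  rw [h4, mulVec, dotProduct]
  exact Finset.dvd_sum fun j _ => Dvd.dvd.mul_right (h1 j) _

/-- The image of the first basis vector under an element of the congruence subgroup of level
`m ^ 2` is brought back by transvections of level `m`. -/
lemma exists_act_act_eq {N : Subgroup (SpZ n)} {m : ℤ} (hm : 2 ≤ m)
    (hN : ∀ u t, T u (m * t) ∈ N) {j j' : Fin n} (hj : j.1 = 0) (hj' : j'.1 = 1) {g : SpZ n}
    (hg : ∀ x i, m * m ∣ act g x i - x i) : ∃ h ∈ N, act h (act g (ve j)) = ve j := by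
  have hv0 : act g (ve j) ∈ Wsub n j := by
    intro i hi
    omega
  obtain ⟨w, hw, hvw⟩ := exists_decomp hv0
  have ha : m * m ∣ act g (ve j) (.inl j) - 1 := by
    have := hg (ve j) (.inl j)
    rwa [show ve j (.inl j) = 1 by simp [ve]] at this
  have hb : m * m ∣ act g (ve j) (.inr j) := by
    have := hg (ve j) (.inr j)
    rwa [show ve j (.inr j) = 0 by simp [ve], sub_zero] at this
  have hF := (act_om g (ve j) (vf j)).trans (om_ve_vf j)
  have hv' := hg (ve j)
  generalize act g (ve j) (.inl j) = a at *
  generalize act g (ve j) (.inr j) = b at *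
  generalize act g (ve j) = v at *
  generalize act g (vf j) = F at *
  have hwd : ∀ i, m * m ∣ w i := by
    intro i
    have h1 : w i = (v i - ve j i) - (a - 1) * ve j i - b * vf j i := by
      rw [hvw]
      simp
      ring
    rw [h1]
    exact dvd_sub (dvd_sub (hv' i) (Dvd.dvd.mul_right ha _)) (Dvd.dvd.mul_right hb _)
  rw [hvw, om_add_left, om_add_left, om_smul_left, om_smul_left] at hF
  by_cases hw0 : w = 0
  · -- a preliminary transvection makes the component outside the first plane nonzero
    have hQ : Quad (ve j) (vf j) (ve j') (vf j') :=
      quad_of_mem (ve_mem (by omega)) (vf_mem (by omega)) (om_ve_vf j')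
    have ha0 : a ≠ 0 := by
      rintro rfl
      have h1 : m * m ∣ 1 := by simpa using ha
      have := Int.le_of_dvd one_pos h1
      nlinarith
    have hmem : E (vf j) (ve j') (m * (-m)) ∈ N := E_mem (hN _ _) (hN _ _) (hN _ _)
    have hact : act (E (vf j) (ve j') (m * (-m))) v =
        a • ve j + b • vf j + (m * m * a) • ve j' := by
      have h1 : om (vf j) (ve j) = -1 := by rw [om_swap, om_ve_vf]
      have h2 : om (ve j') (ve j) = 0 := by rw [om_swap, hQ.er, neg_zero]
      have h3 : om (ve j') (vf j) = 0 := by rw [om_swap, hQ.fr, neg_zero]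
      rw [act_E hQ.fr, hvw, hw0]
      simp only [om_add_right, om_smul_right, om_self, om_zero_right, h1, h2, h3]
      module
    have hbez : om (ve j) F * a + om (vf j) F * b + 0 * (m * m * a) = 1 := by
      rw [hw0, om_zero_left] at hF
      linear_combination hF
    have hmma : m * m * a ≠ 0 := mul_ne_zero (by nlinarith) ha0
    obtain ⟨h, hh, he⟩ := exists_act_eq_of_ne_zero hN hQ hmma hbez ha hb (dvd_mul_right _ _)
    exact ⟨h * E (vf j) (ve j') (m * (-m)), mul_mem hh hmem, by rw [act_mul, hact, he]⟩
  · obtain ⟨c, r, hr, s, hs, hc0, hrs, rfl⟩ := exists_primitive hw hw0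
    have hc : m * m ∣ c := by
      choose w' hw' using hwd
      have h1 : c • r = (m * m) • w' := funext hw'
      have h2 : c = m * m * om w' s := by
        rw [← om_smul_left, ← h1, om_smul_left, hrs, mul_one]
      exact ⟨_, h2⟩
    have hbez : om (ve j) F * a + om (vf j) F * b + om r F * c = 1 := by
      rw [om_smul_left] at hF
      linear_combination hF
    obtain ⟨h, hh, he⟩ := exists_act_eq_of_ne_zero hN (quad_of_mem hr hs hrs) hc0 hbez ha hb hc
    exact ⟨h, hh, by rw [hvw, he]⟩

/-- A subgroup containing all transvections of some level has finite index. -/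
lemma finiteIndex_of_T_mem (hn : 2 ≤ n) {H : Subgroup (SpZ n)} {m : ℕ} (hm : 2 ≤ m)
    (hH : ∀ u t, T u (m * t) ∈ H) : H.FiniteIndex := by
  let N : Subgroup (SpZ n) := Subgroup.normalClosure {g | ∃ u, ∃ t : ℤ, g = T u (m * t)}
  have hN : ∀ u t, T u (m * t) ∈ N := fun u t => Subgroup.subset_normalClosure ⟨u, t, rfl⟩
  have hNH : N ≤ H := by
    refine (Subgroup.closure_le _).mpr ?_
    intro x hx
    obtain ⟨_, ⟨u, t, rfl⟩, hc⟩ := Group.mem_conjugatesOfSet_iff.mp hx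
    obtain ⟨g, rfl⟩ := isConj_iff.mp hc
    rw [T_conj]
    exact hH _ _
  let j : Fin n := ⟨0, by omega⟩
  let j' : Fin n := ⟨1, by omega⟩
  have : NeZero (m * m) := ⟨by positivity⟩
  have hfin : N.FiniteIndex := by
    refine finiteIndex_of_commute (K := (red n (m * m)).ker) (normalClosure_eq_top j rfl)
      (m := m) (by omega) ?_ ?_
    · rw [T_pow]
      exact hN _ _
    · intro g hg
      obtain ⟨h, hh, he⟩ := exists_act_act_eq (j := j) (j' := j') (m := m) (by exact_mod_cast hm)
        hN rfl rfl (g := g) (fun x i => by exact_mod_cast dvd_of_mem_ker hg x i)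
      -- `g T g⁻¹ T⁻¹ = h⁻¹ (T h T⁻¹)`
      have h1 : g * T (ve j) 1 * g⁻¹ = h⁻¹ * T (ve j) 1 * h⁻¹⁻¹ := by
        rw [T_conj, T_conj, act_inv_eq he]
      have h2 : g * T (ve j) 1 * g⁻¹ * (T (ve j) 1)⁻¹
          = h⁻¹ * (T (ve j) 1 * h * (T (ve j) 1)⁻¹) := by
        rw [h1]
        group
      rw [h2]
      exact mul_mem (inv_mem hh) (Subgroup.normalClosure_normal.conj_mem _ hh _)
  exact Subgroup.finiteIndex_of_le hNH

end FiniteIndex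

/-- For `n ≥ 2` and `k ≥ 1`, the subgroup of `Sp_{2n}(ℤ)` generated by the
matrices `(I, B; 0, I)` and `(I, 0; C, I)` with `B`, `C` symmetric integer matrices all of
whose entries are divisible by `k`, has finite index in `Sp_{2n}(ℤ)`. -/
theorem siegel_unipotent_generators_finite_index (n k : ℕ) (hn : 2 ≤ n) (hk : 1 ≤ k) :
    (Subgroup.closure
      ({g : SpZ n | ∃ B : Matrix (Fin n) (Fin n) ℤ, Bᵀ = B ∧ (∀ i j, (k : ℤ) ∣ B i j) ∧
          (g : GL (Fin n ⊕ Fin n) ℤ).val = Matrix.fromBlocks 1 B 0 1} ∪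
       {g : SpZ n | ∃ C : Matrix (Fin n) (Fin n) ℤ, Cᵀ = C ∧ (∀ i j, (k : ℤ) ∣ C i j) ∧
          (g : GL (Fin n ⊕ Fin n) ℤ).val = Matrix.fromBlocks 1 0 C 1})).FiniteIndex := by
  have hk6 : 1 ≤ k ^ 6 := Nat.one_le_pow _ _ hk
  refine finiteIndex_of_T_mem hn (m := 2 * k ^ 6) (by omega) fun u t => ?_
  have h := (lagr_closure n k).T_all hn u (2 * t)
  convert h using 2
  push_cast
  ring
end

section
/- Let K be a number field with ring of integers O_K, let n ≥ 3 and let k ≥ 1 be an integer. Then the subgroup of SL_n(O_K) generated by the upper triangular unipotent matrices and the lower triangular unipotent matrices all of whose off-diagonal entries lie in the ideal kO_K has finite index in SL_n(O_K). -/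
open NumberField

/-!
Write `R = 𝓞 K`, let `E_n` be the subgroup of `SL_n(R)` generated by all elementary matrices, and
let `F` be the subgroup in the theorem, which contains every elementary matrix with entry in `kR`.

*From `E_n` to `F`.* For `v` unimodular and `w ⬝ᵥ v = 0`, the matrix `1 + v wᵀ` is a product of
elementary matrices (Suslin), and keeping track of divisibility by `k` gives that every
`SL_n(R)`-conjugate of an elementary matrix with entry in `k²R` lies in `F` (`conj_el_mem`). Hence
`F` contains the normal closure `N` of those matrices. In `SL_n(R) / N` the image `Q` of `E_n` is
perfect, and the image of the congruence subgroup of level `k²` centralizes it (`comm_el_mem`), so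
the centre of `Q` has finite index in `Q`. By Schur's theorem `Q` is finite, so `N`, and with it
`F`, has finite index as soon as `E_n` has (`finiteIndex_of_E`).

*From `E_n` to `E_3`.* Proper quotients of `R` are finite, hence of stable rank one, and the usual
column reduction shows `SL_n(R) = E_n · SL_{n-1}(R)` for `n ≥ 3` (`column_reduction`,
`finiteIndex_E_of_three`).

*Finiteness of `SL_3 / E_3`.* The map `SL_2(R) → SL_3(R) / E_3` is onto and depends only on the
first row `(a, b)`: it is a Mennicke symbol. Mennicke's relation `[a, b₁][a, b₂] = [a, -b₁b₂]`
(`Men.mul`) shows that the quotient is abelian and that every symbol is torsion, since `b` has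
finite order modulo `a`. A finitely generated abelian torsion group is finite, so it remains to see
that the quotient is finitely generated.

*Finite generation.* It suffices that `SL_2(R)` is generated by a finite set together with
upper triangular matrices and rank one unipotents, all of which die in `SL_3 / E_3`. Fix `m` such
that every ideal class contains an ideal containing `m`, and let `SL_2(R)` act on the left on the
matrices of determinant `m`; matrices congruent modulo `m` lie in the same orbit. A division
algorithm decreases the norm of the lower left entry: for a suitable finite set `T`, for all
`a` and `b ≠ 0` there are `q` and `t ∈ T` with `t * a - q * b` of norm less than `|N b| / |N m|`
(`exists_approx`), and finiteness of the class group turns the vector `W (-q, t)ᵀ` into the first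
column of another matrix of determinant `m` (`exists_class`). Right translation by
`1 + m l e₁₂` is left translation by a rank one unipotent, so only finitely many `q` matter and each
step uses one of finitely many elements of `SL_2(R)` (`exists_finite_generation`).
-/

namespace UnipGen
open Matrix
open scoped commutatorElement

/-! ### Rank one unipotents and elementary matrices -/

section RankOne
variable {ι R : Type*} [Fintype ι] [DecidableEq ι] [CommRing R]

open Classical in
/-- The matrix `1 + v wᵀ` as an element of `SL`, when `w ⬝ᵥ v = 0`; the junk value is `1`. -/
noncomputable def rk (v w : ι → R) : SpecialLinearGroup ι R :=
  if h : w ⬝ᵥ v = 0 then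
    ⟨1 + vecMulVec v w, by
      rw [vecMulVec_eq Unit, det_one_add_replicateCol_mul_replicateRow, h, add_zero]⟩
  else 1

theorem sl_ext {A B : SpecialLinearGroup ι R} (h : (A : Matrix ι ι R) = B) : A = B :=
  Subtype.ext h

theorem coe_mul' (A B : SpecialLinearGroup ι R) :
    ((A * B : SpecialLinearGroup ι R) : Matrix ι ι R) = (A : Matrix ι ι R) * (B : Matrix ι ι R) :=
  rfl

theorem coe_inv_mul_coe (g : SpecialLinearGroup ι R) :
    ((g⁻¹ : SpecialLinearGroup ι R) : Matrix ι ι R) * (g : Matrix ι ι R) = 1 :=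
  congrArg Subtype.val (inv_mul_cancel g)

theorem coe_mul_coe_inv (g : SpecialLinearGroup ι R) :
    (g : Matrix ι ι R) * ((g⁻¹ : SpecialLinearGroup ι R) : Matrix ι ι R) = 1 :=
  congrArg Subtype.val (mul_inv_cancel g)

theorem coe_rk {v w : ι → R} (h : w ⬝ᵥ v = 0) :
    (rk v w : Matrix ι ι R) = 1 + vecMulVec v w := by
  simp [rk, h]

theorem rk_mul_right {v w₁ w₂ : ι → R} (h₁ : w₁ ⬝ᵥ v = 0) (h₂ : w₂ ⬝ᵥ v = 0) :
    rk v w₁ * rk v w₂ = rk v (w₁ + w₂) := by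
  apply sl_ext
  have h : (w₁ + w₂) ⬝ᵥ v = 0 := by rw [add_dotProduct, h₁, h₂, add_zero]
  rw [coe_mul', coe_rk h₁, coe_rk h₂, coe_rk h]
  simp only [mul_add, add_mul, one_mul, mul_one, vecMulVec_mul_vecMulVec, h₁, zero_smul,
    vecMulVec_add, vecMulVec_zero, add_zero]
  abel

theorem rk_mul_left {v₁ v₂ w : ι → R} (h₁ : w ⬝ᵥ v₁ = 0) (h₂ : w ⬝ᵥ v₂ = 0) :
    rk v₁ w * rk v₂ w = rk (v₁ + v₂) w := by
  apply sl_ext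
  have h : w ⬝ᵥ (v₁ + v₂) = 0 := by rw [dotProduct_add, h₁, h₂, add_zero]
  rw [coe_mul', coe_rk h₁, coe_rk h₂, coe_rk h]
  simp only [mul_add, add_mul, one_mul, mul_one, vecMulVec_mul_vecMulVec, h₂, zero_smul,
    add_vecMulVec, vecMulVec_zero, add_zero]
  abel

theorem rk_zero_right (v : ι → R) : rk v 0 = 1 := by
  apply sl_ext
  rw [coe_rk (by simp)]; simp

theorem rk_zero_left (w : ι → R) : rk 0 w = 1 := by
  apply sl_ext
  rw [coe_rk (by simp)]; simp

theorem rk_smul (c : R) (v w : ι → R) (h : w ⬝ᵥ v = 0) : rk (c • v) w = rk v (c • w) := by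
  apply sl_ext
  rw [coe_rk (by simp [h]), coe_rk (by simp [h])]
  simp

theorem rk_inv {v w : ι → R} (h : w ⬝ᵥ v = 0) : (rk v w)⁻¹ = rk v (-w) := by
  rw [inv_eq_iff_mul_eq_one, rk_mul_right h (by simp [h])]
  simp [rk_zero_right]

theorem conj_rk (g : SpecialLinearGroup ι R) {v w : ι → R} (h : w ⬝ᵥ v = 0) :
    g * rk v w * g⁻¹ = rk (g.1 *ᵥ v) (w ᵥ* (g⁻¹).1) := by
  have hg : (g⁻¹).1 * g.1 = 1 := coe_inv_mul_coe g
  have hg' : g.1 * (g⁻¹).1 = 1 := coe_mul_coe_inv g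
  have h' : (w ᵥ* (g⁻¹).1) ⬝ᵥ (g.1 *ᵥ v) = 0 := by
    rw [dotProduct_mulVec, vecMul_vecMul, hg, vecMul_one, h]
  apply sl_ext
  rw [coe_mul', coe_mul', coe_rk h, coe_rk h', mul_add,
    add_mul, mul_one, hg', mul_vecMulVec, vecMulVec_mul]

/-- The elementary matrix `1 + x E_{ij}`. -/
noncomputable def el (i j : ι) (x : R) : SpecialLinearGroup ι R :=
  rk (Pi.single i x) (Pi.single j 1)

theorem coe_el {i j : ι} (h : i ≠ j) (x : R) : (el i j x : Matrix ι ι R) = 1 + single i j x := by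
  rw [el, coe_rk (by simp [h.symm])]
  congr 1
  ext a b
  simp only [vecMulVec_apply, single_apply, Pi.single_apply]
  grind

theorem el_add {i j : ι} (h : i ≠ j) (x y : R) : el i j x * el i j y = el i j (x + y) := by
  rw [el, el, rk_mul_left (by simp [h.symm]) (by simp [h.symm]), el, Pi.single_add]

theorem el_zero (i j : ι) : el i j (0 : R) = 1 := by
  rw [el, Pi.single_zero, rk_zero_left]

theorem el_inv {i j : ι} (h : i ≠ j) (x : R) : (el i j x)⁻¹ = el i j (-x) := by
  rw [inv_eq_iff_mul_eq_one, el_add h, add_neg_cancel, el_zero]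

/-- `1 + u wᵀ` is a commutator when `u` and `wᵀ` avoid the coordinate `l`. -/
theorem comm_rk {u w : ι → R} {l : ι} (h : w ⬝ᵥ u = 0) (hu : u l = 0) (hw : w l = 0) :
    ⁅rk u (Pi.single l 1), rk (Pi.single l 1) w⁆ = rk u w := by
  have h1 : (Pi.single l 1 : ι → R) ⬝ᵥ u = 0 := by simp [hu]
  have h2 : w ⬝ᵥ (Pi.single l 1 : ι → R) = 0 := by simp [hw]
  rw [commutatorElement_def, conj_rk _ h2, rk_inv h1, rk_inv h2]
  have e1 : (rk u (Pi.single l 1)).1 *ᵥ (Pi.single l 1 : ι → R) = Pi.single l 1 + u := by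
    rw [coe_rk h1, add_mulVec, one_mulVec, vecMulVec_mulVec]
    simp
  have e2 : w ᵥ* (rk u (-Pi.single l 1)).1 = w := by
    rw [coe_rk (by simp [hu]), vecMul_add, vecMul_one, vecMul_vecMulVec, h]
    simp
  rw [e1, e2, add_comm, ← rk_mul_left h h2, mul_assoc, rk_mul_right h2]
  · simp [rk_zero_right]
  · simp [hw]

theorem comm_el {i j l : ι} (hij : i ≠ j) (hil : i ≠ l) (hlj : l ≠ j) (x y : R) :
    ⁅el i l x, el l j y⁆ = el i j (x * y) := by
  have : el l j y = rk (Pi.single l 1) (Pi.single j y) := by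
    rw [el, show (Pi.single l y : ι → R) = y • Pi.single l 1 by simp [← Pi.single_smul], rk_smul]
    · simp [← Pi.single_smul]
    · simp [hlj.symm]
  rw [this, el, comm_rk]
  · rw [el, show (Pi.single i (x * y) : ι → R) = y • Pi.single i x by
      simp [← Pi.single_smul, mul_comm], rk_smul]
    · simp [← Pi.single_smul]
    · simp [hij.symm]
  · simp [hij.symm]
  · simp [hil.symm]
  · simp [hlj]

theorem rk_sum_mem {κ : Type*} (H : Subgroup (SpecialLinearGroup ι R)) (v : ι → R) (s : Finset κ)
    (f : κ → ι → R) (h : ∀ a ∈ s, f a ⬝ᵥ v = 0) (hH : ∀ a ∈ s, rk v (f a) ∈ H) :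
    rk v (∑ a ∈ s, f a) ∈ H := by
  classical
  have : (∑ a ∈ s, f a) ⬝ᵥ v = 0 ∧ rk v (∑ a ∈ s, f a) ∈ H := by
    induction s using Finset.induction_on with
    | empty => simp [rk_zero_right, H.one_mem]
    | insert a s ha ih =>
      obtain ⟨i1, i2⟩ := ih (fun b hb => h b (Finset.mem_insert_of_mem hb))
        (fun b hb => hH b (Finset.mem_insert_of_mem hb))
      have h1 := h a (Finset.mem_insert_self _ _)
      rw [Finset.sum_insert ha, ← rk_mul_right h1 i1]
      exact ⟨by rw [add_dotProduct, h1, i1, add_zero],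
        H.mul_mem (hH a (Finset.mem_insert_self _ _)) i2⟩
  exact this.2

theorem rk_sum_mem_left {κ : Type*} (H : Subgroup (SpecialLinearGroup ι R)) (w : ι → R)
    (s : Finset κ)
    (f : κ → ι → R) (h : ∀ a ∈ s, w ⬝ᵥ f a = 0) (hH : ∀ a ∈ s, rk (f a) w ∈ H) :
    rk (∑ a ∈ s, f a) w ∈ H := by
  classical
  have : w ⬝ᵥ (∑ a ∈ s, f a) = 0 ∧ rk (∑ a ∈ s, f a) w ∈ H := by
    induction s using Finset.induction_on with
    | empty => simp [rk_zero_left, H.one_mem]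
    | insert a s ha ih =>
      obtain ⟨i1, i2⟩ := ih (fun b hb => h b (Finset.mem_insert_of_mem hb))
        (fun b hb => hH b (Finset.mem_insert_of_mem hb))
      have h1 := h a (Finset.mem_insert_self _ _)
      rw [Finset.sum_insert ha, ← rk_mul_left h1 i1]
      exact ⟨by rw [dotProduct_add, h1, i1, add_zero],
        H.mul_mem (hH a (Finset.mem_insert_self _ _)) i2⟩
  exact this.2

/-- A unipotent matrix differing from `1` in a single column is a product of elementary ones. -/
theorem rk_col_mem (H : Subgroup (SpecialLinearGroup ι R)) {v : ι → R} {p : ι} (hv : v p = 0)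
    (c : R) (hH : ∀ m, m ≠ p → el m p (c * v m) ∈ H) : rk v (Pi.single p c) ∈ H := by
  have h0 : (Pi.single p 1 : ι → R) ⬝ᵥ v = 0 := by simp [hv]
  have e : (Pi.single p c : ι → R) = c • Pi.single p 1 := by simp [← Pi.single_smul]
  rw [e, ← rk_smul _ _ _ h0]
  have e2 : c • v = ∑ m, (Pi.single m (c * v m) : ι → R) := by
    rw [Finset.univ_sum_single (fun m => c * v m)]; rfl
  rw [e2]
  apply rk_sum_mem_left
  · intro a _
    rcases eq_or_ne a p with rfl | h
    · simp [hv]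
    · simp [h.symm]
  · intro a _
    rcases eq_or_ne a p with rfl | h
    · simp [hv, rk_zero_left, H.one_mem]
    · exact hH a h

theorem el_eq_rk {l j : ι} (hlj : l ≠ j) (y : R) :
    el l j y = rk (Pi.single l 1) (Pi.single j y) := by
  rw [el, show (Pi.single l y : ι → R) = y • Pi.single l 1 by simp [← Pi.single_smul], rk_smul]
  · simp [← Pi.single_smul]
  · simp [hlj.symm]

/-- Unipotent matrices differing from `1` in a single row are products of elementary ones. -/
theorem rk_row_mem (H : Subgroup (SpecialLinearGroup ι R)) {w : ι → R} {p : ι} (hw : w p = 0)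
    (hH : ∀ m, m ≠ p → el p m (w m) ∈ H) : rk (Pi.single p 1) w ∈ H := by
  have e2 : w = ∑ m, (Pi.single m (w m) : ι → R) := by
    rw [Finset.univ_sum_single (fun m => w m)]
  rw [e2]
  apply rk_sum_mem
  · intro a _
    rcases eq_or_ne a p with rfl | h
    · simp [hw]
    · simp [h]
  · intro a _
    rcases eq_or_ne a p with rfl | h
    · simp [hw, rk_zero_right, H.one_mem]
    · rw [← el_eq_rk h.symm]; exact hH a h

/-- The basic row orthogonal to `v`: `v_q e_p - v_p e_q`. -/
def orow (v : ι → R) (p q : ι) : ι → R := Pi.single p (v q) - Pi.single q (v p)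

theorem orow_dot (v : ι → R) (p q : ι) : orow v p q ⬝ᵥ v = 0 := by
  simp [orow, sub_dotProduct, mul_comm]

/-- Any row orthogonal to a unimodular column is a combination of the rows `orow`. -/
theorem suslin_decomp {v w y : ι → R} (hy : y ⬝ᵥ v = 1) (hw : w ⬝ᵥ v = 0) :
    w = ∑ a : ι × ι, (w a.1 * y a.2) • orow v a.1 a.2 := by
  rw [Fintype.sum_prod_type]
  ext m
  simp only [orow, Finset.sum_apply, Pi.smul_apply, Pi.sub_apply, smul_eq_mul, mul_sub,
    Finset.sum_sub_distrib, Pi.single_apply, mul_ite, mul_zero]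
  rw [Finset.sum_comm]
  simp only [Finset.sum_ite_eq, Finset.mem_univ, if_true]
  have e1 : ∑ q, w m * y q * v q = w m := by
    simp only [mul_assoc, ← Finset.mul_sum]
    change w m * (y ⬝ᵥ v) = w m
    rw [hy, mul_one]
  have e2 : ∑ p, w p * y m * v p = 0 := by
    have : ∑ p, w p * y m * v p = y m * (w ⬝ᵥ v) := by
      simp only [dotProduct, Finset.mul_sum]
      exact Finset.sum_congr rfl fun _ _ => by ring
    rw [this, hw, mul_zero]
  rw [e1, e2, sub_zero]

/-- The part of `v` supported on `{p, q}`. -/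
def blk (v : ι → R) (p q : ι) : ι → R := Pi.single p (v p) + Pi.single q (v q)

theorem orow_dot_blk (v : ι → R) {p q : ι} (h : p ≠ q) : orow v p q ⬝ᵥ blk v p q = 0 := by
  simp [orow, blk, sub_dotProduct, h, h.symm, mul_comm]

/-- Splitting off the part of `1 + v wᵀ`, `w = r • orow v p q`, supported on the rows `p, q`. The
remaining factors differ from `1` in one column only. -/
theorem rk_split (v : ι → R) {p q : ι} (h : p ≠ q) (r : R) :
    rk v (r • orow v p q) = rk (blk v p q) (r • orow v p q) *
      (rk (v - blk v p q) (Pi.single p (r * v q)) * rk (v - blk v p q) (Pi.single q (-(r * v p)))) := by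
  have hp : (v - blk v p q) p = 0 := by simp [blk, h]
  have hq : (v - blk v p q) q = 0 := by simp [blk, h.symm]
  rw [rk_mul_right (by rw [single_dotProduct, hp, mul_zero]) (by rw [single_dotProduct, hq, mul_zero])]
  have e : (Pi.single p (r * v q) + Pi.single q (-(r * v p)) : ι → R) = r • orow v p q := by
    simp [orow, smul_sub, ← Pi.single_smul, sub_eq_add_neg, Pi.single_neg]
  rw [e, rk_mul_left]
  · simp
  · simp [orow_dot_blk v h]
  · simp [dotProduct_sub, orow_dot_blk v h, orow_dot]

theorem rk_blk (v : ι → R) {p q l : ι} (h : p ≠ q) (hp : p ≠ l) (hq : q ≠ l) (c d : R) :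
    ⁅rk (c • blk v p q) (Pi.single l 1), rk (Pi.single l 1) (d • orow v p q)⁆ =
      rk (blk v p q) ((c * d) • orow v p q) := by
  rw [comm_rk, rk_smul, smul_smul]
  · simp [orow_dot_blk v h]
  · simp [orow_dot_blk v h]
  · simp [blk, hp, hq]
  · simp [orow, hp, hq]

theorem rk_smul_blk (v : ι → R) {p q l : ι} (hp : p ≠ l) (hq : q ≠ l) (c : R) :
    rk (c • blk v p q) (Pi.single l 1) = el p l (c * v p) * el q l (c * v q) := by
  rw [el, el, rk_mul_left (by simp [hp.symm]) (by simp [hq.symm])]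
  simp [blk, smul_add, ← Pi.single_smul]

theorem rk_smul_orow (v : ι → R) {p q l : ι} (hp : p ≠ l) (hq : q ≠ l) (d : R) :
    rk (Pi.single l 1) (d • orow v p q) = el l p (d * v q) * el l q (-(d * v p)) := by
  rw [el_eq_rk hp.symm, el_eq_rk hq.symm, rk_mul_right (by simp [hp]) (by simp [hq])]
  simp [orow, smul_sub, ← Pi.single_smul, sub_eq_add_neg, Pi.single_neg]

variable (ι) in
/-- For any two indices there is one different from both; for nonempty `ι` this means that `ι` has
at least three elements. -/
def Third : Prop := ∀ p q : ι, ∃ l, p ≠ l ∧ q ≠ l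

/-- The part of `rk v (r • orow v p q)` outside the block. -/
theorem rk_rest_mem (H : Subgroup (SpecialLinearGroup ι R)) (v : ι → R) {p q : ι} (h : p ≠ q)
    (r : R) (hH : ∀ i j, i ≠ j → i ≠ p → i ≠ q → ∀ x, el i j (r * v i * x) ∈ H) :
    rk (v - blk v p q) (Pi.single p (r * v q)) *
      rk (v - blk v p q) (Pi.single q (-(r * v p))) ∈ H := by
  have hp : (v - blk v p q) p = 0 := by simp [blk, h]
  have hq : (v - blk v p q) q = 0 := by simp [blk, h.symm]
  have hm : ∀ m, m ≠ p → m ≠ q → (v - blk v p q) m = v m := by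
    intro m h1 h2
    simp [blk, h1, h2]
  refine H.mul_mem (rk_col_mem H hp _ ?_) (rk_col_mem H hq _ ?_)
  · intro m hmp
    rcases eq_or_ne m q with rfl | hmq
    · rw [hq, mul_zero, el_zero]; exact H.one_mem
    · rw [hm m hmp hmq]
      convert hH m p hmp hmp hmq (v q) using 2
      ring
  · intro m hmq
    rcases eq_or_ne m p with rfl | hmp
    · rw [hp, mul_zero, el_zero]; exact H.one_mem
    · rw [hm m hmp hmq]
      convert hH m q hmq hmp hmq (-v p) using 2
      ring

/-- If `F` contains all elementary matrices with entries in `kR`, it contains all conjugates in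
`SL` of the elementary matrices with entries in `k²R`. -/
theorem conj_el_mem (h3 : Third ι) (k : R) (F : Subgroup (SpecialLinearGroup ι R))
    (hF : ∀ i j, i ≠ j → ∀ x, el i j (k * x) ∈ F) (g : SpecialLinearGroup ι R) {i j : ι}
    (hij : i ≠ j) (x : R) : g * el i j (k * k * x) * g⁻¹ ∈ F := by
  have hg : (g⁻¹).1 * g.1 = 1 := coe_inv_mul_coe g
  rw [el_eq_rk hij, conj_rk _ (by simp [hij])]
  set v := g.1 *ᵥ (Pi.single i 1) with hv
  have hy : (Pi.single i 1 ᵥ* (g⁻¹).1) ⬝ᵥ v = 1 := by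
    rw [hv, dotProduct_mulVec, vecMul_vecMul, hg, vecMul_one]; simp
  have hw : (Pi.single j (1 : R) ᵥ* (g⁻¹).1) ⬝ᵥ v = 0 := by
    rw [hv, dotProduct_mulVec, vecMul_vecMul, hg, vecMul_one]; simp [hij]
  have e : (Pi.single j (k * k * x) : ι → R) = (k * k * x) • Pi.single j 1 := by
    simp [← Pi.single_smul]
  rw [e, smul_vecMul, suslin_decomp hy hw, Finset.smul_sum]
  apply rk_sum_mem
  · intro a _; simp [orow_dot]
  · rintro ⟨p, q⟩ _
    simp only [smul_smul]
    rcases eq_or_ne p q with rfl | hpq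
    · simp [orow, rk_zero_right, F.one_mem]
    obtain ⟨l, hp, hq⟩ := h3 p q
    generalize (Pi.single j (1 : R) ᵥ* (g⁻¹).1) p * (Pi.single i 1 ᵥ* (g⁻¹).1) q = s
    rw [rk_split _ hpq]
    refine F.mul_mem ?_ (rk_rest_mem F v hpq _ ?_)
    · rw [show k * k * x * s = k * (k * (x * s)) by ring, ← rk_blk v hpq hp hq,
        commutatorElement_def]
      have h1 : rk (k • blk v p q) (Pi.single l 1) ∈ F := by
        rw [rk_smul_blk v hp hq]
        exact F.mul_mem (hF _ _ hp _) (hF _ _ hq _)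
      have h2 : rk (Pi.single l 1) ((k * (x * s)) • orow v p q) ∈ F := by
        rw [rk_smul_orow v hp hq]
        refine F.mul_mem ?_ ?_
        · rw [mul_assoc]; exact hF _ _ hp.symm _
        · rw [mul_assoc, ← mul_neg]; exact hF _ _ hq.symm _
      exact F.mul_mem (F.mul_mem (F.mul_mem h1 h2) (F.inv_mem h1)) (F.inv_mem h2)
    · intro a b hab _ _ z
      rw [show k * k * x * s * v a * z = k * (k * x * s * v a * z) by ring]
      exact hF _ _ hab _

/-- A matrix congruent to `1` modulo `J` commutes with the elementary matrices modulo any normal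
subgroup containing the elementary matrices with entries in `J`. -/
theorem comm_el_mem (h3 : Third ι) (J : Ideal R) (N : Subgroup (SpecialLinearGroup ι R))
    [hN : N.Normal] (hNJ : ∀ i j, i ≠ j → ∀ x ∈ J, el i j x ∈ N) (g : SpecialLinearGroup ι R)
    (hg : ∀ i j, g.1 i j - (1 : Matrix ι ι R) i j ∈ J)
    (hg' : ∀ i j, (g⁻¹).1 i j - (1 : Matrix ι ι R) i j ∈ J) {i j : ι}
    (hij : i ≠ j) (x : R) :
    QuotientGroup.mk' N (g * el i j x * g⁻¹) = QuotientGroup.mk' N (el i j x) := by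
  set π := QuotientGroup.mk' N with hπ
  have hπ1 : ∀ n ∈ N, π n = 1 := fun n hn => (QuotientGroup.eq_one_iff n).2 hn
  have hπel : ∀ a b, a ≠ b → ∀ s t : R, s - t ∈ J → π (el a b s) = π (el a b t) := by
    intro a b hab s t hst
    rw [show s = (s - t) + t by ring, ← el_add hab, map_mul, hπ1 _ (hNJ a b hab _ hst), one_mul]
  have hgg : (g⁻¹).1 * g.1 = 1 := coe_inv_mul_coe g
  rw [el_eq_rk hij, conj_rk _ (by simp [hij])]
  set v := g.1 *ᵥ (Pi.single i 1) with hv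
  set w := Pi.single j (1 : R) ᵥ* (g⁻¹).1 with hwd
  set y := Pi.single i (1 : R) ᵥ* (g⁻¹).1 with hyd
  have hy : y ⬝ᵥ v = 1 := by
    rw [hv, hyd, dotProduct_mulVec, vecMul_vecMul, hgg, vecMul_one]; simp
  have hw : w ⬝ᵥ v = 0 := by
    rw [hv, hwd, dotProduct_mulVec, vecMul_vecMul, hgg, vecMul_one]; simp [hij]
  have vm : ∀ m, m ≠ i → v m ∈ J := by
    intro m hm
    have := hg m i
    rw [one_apply_ne hm, sub_zero] at this
    simpa [hv] using this
  have vi : v i - 1 ∈ J := by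
    have := hg i i
    simpa [hv] using this
  have wm : ∀ m, m ≠ j → w m ∈ J := by
    intro m hm
    have := hg' j m
    rw [one_apply_ne hm.symm, sub_zero] at this
    simpa [hwd] using this
  have wj : w j - 1 ∈ J := by
    have := hg' j j
    simpa [hwd] using this
  have ym : ∀ m, m ≠ i → y m ∈ J := by
    intro m hm
    have := hg' i m
    rw [one_apply_ne hm.symm, sub_zero] at this
    simpa [hyd] using this
  have yi : y i - 1 ∈ J := by
    have := hg' i i
    simpa [hyd] using this
  have e : (Pi.single j x : ι → R) = x • Pi.single j 1 := by
    simp [← Pi.single_smul]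
  have e2 : (Pi.single j x ᵥ* (g⁻¹).1) = (x * (w j * y i)) • orow v j i +
      ∑ a ∈ Finset.univ.erase (j, i), (x * (w a.1 * y a.2)) • orow v a.1 a.2 := by
    rw [e, smul_vecMul, ← hwd]
    conv_lhs => rw [suslin_decomp hy hw, Finset.smul_sum]
    rw [← Finset.add_sum_erase _ _ (Finset.mem_univ (j, i))]
    simp [smul_smul]
  have d0 : (∑ a ∈ Finset.univ.erase (j, i), (x * (w a.1 * y a.2)) • orow v a.1 a.2) ⬝ᵥ v = 0 := by
    rw [sum_dotProduct]
    exact Finset.sum_eq_zero fun a _ => by simp [orow_dot]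
  rw [e2, ← rk_mul_right (by simp [orow_dot]) d0, map_mul, hπ1 (rk v (Finset.sum _ _)), mul_one]
  · obtain ⟨l, hp, hq⟩ := h3 j i
    rw [rk_split _ hij.symm, map_mul, hπ1 (_ * _), mul_one]
    · have := rk_blk v hij.symm hp hq (x * (w j * y i)) 1
      rw [mul_one] at this
      rw [← this, map_commutatorElement, rk_smul_blk v hp hq, rk_smul_orow v hp hq, map_mul,
        map_mul, hπ1 (el j l _), hπ1 (el l i _), one_mul, mul_one, hπel i l hq _ x,
        hπel l j hp.symm _ 1, ← map_commutatorElement, comm_el hij hq hp.symm, mul_one,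
        el_eq_rk hij]
      · rw [one_mul]; exact vi
      · rw [← Ideal.Quotient.mk_eq_mk_iff_sub_mem] at *
        rw [map_one] at *
        simp only [map_mul, wj, yi, vi, mul_one]
      · apply hNJ _ _ hq.symm
        rw [one_mul]
        exact J.neg_mem (vm j hij.symm)
      · apply hNJ _ _ hp
        exact J.mul_mem_left _ (vm j hij.symm)
    · apply rk_rest_mem N v hij.symm
      intro a b hab _ hai z
      exact hNJ _ _ hab _ (J.mul_mem_right _ (J.mul_mem_left _ (vm a hai)))
  · apply rk_sum_mem
    · intro a _; simp [orow_dot]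
    · rintro ⟨p, q⟩ hpq0
      have hr : w p * y q ∈ J := by
        rcases eq_or_ne p j with rfl | hpj
        · have : q ≠ i := by rintro rfl; simp at hpq0
          exact J.mul_mem_left _ (ym q this)
        · exact J.mul_mem_right _ (wm p hpj)
      have hr' : x * (w p * y q) ∈ J := J.mul_mem_left _ hr
      change rk v ((x * (w p * y q)) • orow v p q) ∈ N
      generalize x * (w p * y q) = s at hr'
      rcases eq_or_ne p q with rfl | hpq
      · simp [orow, rk_zero_right, N.one_mem]
      obtain ⟨l, hp, hq⟩ := h3 p q
      rw [rk_split _ hpq]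
      refine N.mul_mem ?_ (rk_rest_mem N v hpq _ ?_)
      · have := rk_blk v hpq hp hq s 1
        rw [mul_one] at this
        rw [← this, commutatorElement_def]
        have h1 : rk (s • blk v p q) (Pi.single l 1) ∈ N := by
          rw [rk_smul_blk v hp hq]
          exact N.mul_mem (hNJ _ _ hp _ (J.mul_mem_right _ hr'))
            (hNJ _ _ hq _ (J.mul_mem_right _ hr'))
        rw [mul_assoc, mul_assoc, ← mul_assoc (rk (Pi.single l 1) _)]
        exact N.mul_mem h1 (hN.conj_mem _ (N.inv_mem h1) _)
      · intro a b hab _ _ z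
        rw [mul_assoc]
        exact hNJ _ _ hab _ (J.mul_mem_right _ hr')

end RankOne

/-! ### From the elementary subgroup to its level `k` version -/

/-- Schur's theorem in the perfect case: a perfect group whose centre has finite index is finite,
because a commutator depends only on the classes of its entries modulo the centre. -/
theorem finite_of_perfect {Q : Type*} [Group Q] [hc : (Subgroup.center Q).FiniteIndex]
    (hp : commutator Q = ⊤) : Finite Q := by
  have hfin : Finite (commutatorSet Q) := by
    have : commutatorSet Q ⊆ Set.range
        (fun a : (Q ⧸ Subgroup.center Q) × (Q ⧸ Subgroup.center Q) => ⁅a.1.out, a.2.out⁆) := by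
      rintro _ ⟨g, h, rfl⟩
      refine ⟨((g : Q ⧸ Subgroup.center Q), (h : Q ⧸ Subgroup.center Q)), ?_⟩
      obtain ⟨c, hc⟩ := QuotientGroup.mk_out_eq_mul (Subgroup.center Q) g
      obtain ⟨d, hd⟩ := QuotientGroup.mk_out_eq_mul (Subgroup.center Q) h
      simp only [hc, hd, commutatorElement_def, _root_.mul_inv_rev]
      have hc' := Subgroup.mem_center_iff.1 c.2
      have hd' := Subgroup.mem_center_iff.1 d.2
      have e1 : g * c.1 * (h * d.1) * (c.1⁻¹ * g⁻¹) * (d.1⁻¹ * h⁻¹) =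
          g * (c.1 * (h * d.1)) * c.1⁻¹ * (g⁻¹ * d.1⁻¹) * h⁻¹ := by group
      have e2 : g⁻¹ * d.1⁻¹ = d.1⁻¹ * g⁻¹ := by
        rw [← _root_.mul_inv_rev, ← _root_.mul_inv_rev, hd']
      rw [e1, e2, ← hc' (h * d.1)]
      group
    exact (Set.finite_range _).subset this
  have : Finite (commutator Q) := inferInstance
  rw [hp] at this
  exact Finite.of_equiv _ Subgroup.topEquiv.toEquiv

section
variable (ι R : Type*) [Fintype ι] [DecidableEq ι] [CommRing R]

/-- The elementary subgroup of `SL`. -/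
noncomputable def E : Subgroup (SpecialLinearGroup ι R) :=
  Subgroup.closure {g | ∃ i j x, i ≠ j ∧ g = el i j x}
end
section
variable {ι R : Type*} [Fintype ι] [DecidableEq ι] [CommRing R]

theorem el_mem {i j : ι} (h : i ≠ j) (x : R) : el i j x ∈ E ι R :=
  Subgroup.subset_closure ⟨i, j, x, h, rfl⟩

/-- Suslin's normality theorem: the case `k = 1` of `conj_el_mem`. -/
theorem E_normal (h3 : Third ι) : (E ι R).Normal := by
  constructor
  intro n hn g
  unfold E at hn
  induction hn using Subgroup.closure_induction with
  | mem x hx =>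
    obtain ⟨i, j, x, hij, rfl⟩ := hx
    have := conj_el_mem h3 1 (E ι R) (fun i j h x => el_mem h _) g hij x
    simpa using this
  | one => simp [Subgroup.one_mem]
  | mul x y _ _ hx hy =>
    have := (E ι R).mul_mem hx hy
    simpa [mul_assoc] using this
  | inv x _ hx =>
    have := (E ι R).inv_mem hx
    simpa [mul_assoc] using this

/-- With `N` the normal closure of the elementary matrices with entry in `k²R`, the image of `E`
in `SL / N` is perfect and has a centre of finite index, hence is finite; and `N ≤ F`. -/
theorem finiteIndex_of_E (h3 : Third ι) (k : R) [Finite (R ⧸ Ideal.span {k * k})]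
    (F : Subgroup (SpecialLinearGroup ι R)) (hF : ∀ i j, i ≠ j → ∀ x, el i j (k * x) ∈ F)
    (hE : (E ι R).FiniteIndex) : F.FiniteIndex := by
  set s : Set (SpecialLinearGroup ι R) := {g | ∃ i j x, i ≠ j ∧ g = el i j (k * k * x)} with hs
  set N := Subgroup.normalClosure s with hN
  have hNF : N ≤ F := by
    rw [hN, Subgroup.normalClosure, Subgroup.closure_le]
    intro a ha
    obtain ⟨b, ⟨i, j, x, hij, rfl⟩, hb⟩ := Group.mem_conjugatesOfSet_iff.1 ha
    obtain ⟨c, rfl⟩ := isConj_iff.1 hb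
    exact conj_el_mem h3 k F hF c hij x
  set J := Ideal.span {k * k} with hJ
  have hNJ : ∀ i j, i ≠ j → ∀ x ∈ J, el i j x ∈ N := by
    intro i j hij x hx
    obtain ⟨y, rfl⟩ := Ideal.mem_span_singleton.1 hx
    exact Subgroup.subset_normalClosure ⟨i, j, y, hij, rfl⟩
  set π := QuotientGroup.mk' N with hπ
  have hπs : Function.Surjective π := QuotientGroup.mk'_surjective N
  set Q := (E ι R).map π with hQ
  have hQi : Q.FiniteIndex :=
    ⟨fun h0 => hE.index_ne_zero (Nat.eq_zero_of_zero_dvd (h0 ▸ Subgroup.index_map_dvd _ hπs))⟩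
  have hperf : commutator Q = ⊤ := by
    apply Subgroup.map_injective Q.subtype_injective
    rw [Subgroup.map_subtype_commutator]
    apply le_antisymm
    · rw [← MonoidHom.range_eq_map, Subgroup.range_subtype]
      exact Subgroup.commutator_le_self Q
    · rw [← MonoidHom.range_eq_map, Subgroup.range_subtype, hQ, E, Subgroup.map_le_iff_le_comap,
        Subgroup.closure_le]
      rintro _ ⟨i, j, x, hij, rfl⟩
      obtain ⟨l, hil, hjl⟩ := h3 i j
      have := comm_el hij hil hjl.symm x 1
      rw [mul_one] at this
      rw [SetLike.mem_coe, Subgroup.mem_comap]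
      rw [← this, map_commutatorElement]
      exact Subgroup.commutator_mem_commutator
        (Subgroup.mem_map_of_mem _ (el_mem hil _)) (Subgroup.mem_map_of_mem _ (el_mem hjl.symm _))
  set Γ := (SpecialLinearGroup.map (n := ι) (Ideal.Quotient.mk J)).ker with hΓ
  have hΓi : Γ.FiniteIndex := inferInstance
  have hΓπ : (Γ.map π).FiniteIndex :=
    ⟨fun h0 => hΓi.index_ne_zero (Nat.eq_zero_of_zero_dvd (h0 ▸ Subgroup.index_map_dvd _ hπs))⟩
  have hmod : ∀ g ∈ Γ, ∀ i j, g.1 i j - (1 : Matrix ι ι R) i j ∈ J := by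
    intro g hg i j
    rw [← Ideal.Quotient.mk_eq_mk_iff_sub_mem]
    have h1 := congrArg (fun m : SpecialLinearGroup ι (R ⧸ J) => m.1 i j) (MonoidHom.mem_ker.1 hg)
    change (Ideal.Quotient.mk J) (g.1 i j) = (1 : Matrix ι ι (R ⧸ J)) i j at h1
    rw [h1, one_apply, one_apply]
    split_ifs <;> simp
  have hcen : (Γ.map π).subgroupOf Q ≤ Subgroup.center Q := by
    rintro ⟨a, haQ⟩ ha
    rw [Subgroup.mem_subgroupOf] at ha
    obtain ⟨g, hg, rfl : π g = a⟩ := ha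
    rw [Subgroup.mem_center_iff]
    rintro ⟨b, ⟨e, he, rfl⟩⟩
    apply Subtype.ext
    change π e * π g = π g * π e
    unfold E at he
    have key : ∀ e ∈ E ι R, π e ∈ Subgroup.centralizer {π g} := by
      change E ι R ≤ (Subgroup.centralizer {π g}).comap π
      rw [E, Subgroup.closure_le]
      rintro _ ⟨i, j, x, hij, rfl⟩
      rw [SetLike.mem_coe, Subgroup.mem_comap]
      rw [Subgroup.mem_centralizer_singleton_iff]
      have := comm_el_mem h3 J N hNJ g (hmod g hg) (hmod _ (Γ.inv_mem hg)) hij x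
      rw [map_mul, map_mul, map_inv, mul_inv_eq_iff_eq_mul] at this
      exact this.symm
    exact Subgroup.mem_centralizer_singleton_iff.1 (key e he)
  have : (Subgroup.center Q).FiniteIndex := Subgroup.finiteIndex_of_le hcen
  have hQfin : Finite Q := finite_of_perfect hperf
  have : Finite (SpecialLinearGroup ι R ⧸ N) := by
    apply Nat.finite_of_card_ne_zero
    rw [← Q.card_mul_index]
    exact mul_ne_zero Nat.card_pos.ne' hQi.index_ne_zero
  have : N.FiniteIndex := Subgroup.finiteIndex_of_finite_quotient
  exact Subgroup.finiteIndex_of_le hNF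
end

/-! ### Column reduction: from `SL₃` to `SLₙ` -/

/-- Finite commutative rings have stable rank one. -/
theorem exists_unit_add {S : Type*} [CommRing S] [Finite S] {b s : S} (h : IsCoprime b s) :
    ∃ x, IsUnit (b + s * x) := by
  obtain ⟨i, j, hij, hb⟩ := Finite.exists_ne_map_eq_of_infinite (fun n : ℕ => b ^ n)
  wlog hlt : i < j generalizing i j
  · exact this j i hij.symm hb.symm (by omega)
  -- modulo a maximal ideal, `1 - b ^ (j - i)` vanishes unless `b` does
  refine ⟨1 - b ^ (j - i), ?_⟩
  by_contra hu
  obtain ⟨m, hm, hmem⟩ := exists_max_ideal_of_mem_nonunits hu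
  have hbm : b ∈ m := by
    by_contra hbm
    have h0 : b ^ i * (1 - b ^ (j - i)) = 0 := by
      rw [mul_sub, mul_one, ← pow_add, Nat.add_sub_cancel' hlt.le, sub_eq_zero]
      exact hb
    have h1 : (1 - b ^ (j - i)) ∈ m := by
      rcases hm.isPrime.mem_or_mem (h0 ▸ m.zero_mem : b ^ i * (1 - b ^ (j - i)) ∈ m) with h | h
      · exact absurd (hm.isPrime.mem_of_pow_mem _ h) hbm
      · exact h
    exact hbm (by simpa using m.sub_mem hmem (m.mul_mem_left s h1))
  have ht : b ^ (j - i) ∈ m := Ideal.pow_mem_of_mem m hbm _ (by omega)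
  have hs : s ∈ m := by
    have h1 : s * (1 - b ^ (j - i)) ∈ m := by simpa using m.sub_mem hmem hbm
    have h2 := m.add_mem h1 (m.mul_mem_left s ht)
    rw [← mul_add] at h2
    simpa using h2
  obtain ⟨α, β, hab⟩ := h
  exact hm.ne_top ((Ideal.eq_top_iff_one _).2
    (hab ▸ m.add_mem (m.mul_mem_left _ hbm) (m.mul_mem_left _ hs)))

/-- If `d, b, s` generate the unit ideal and `R / d` is finite, then `b` can be changed by a
multiple of `s` to become coprime to `d`. -/
theorem exists_coprime_add {R : Type*} [CommRing R] {d : R} [Finite (R ⧸ Ideal.span {d})] {b s : R}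
    (h : ∃ α β γ, α * d + β * b + γ * s = 1) : ∃ x, IsCoprime d (b + s * x) := by
  obtain ⟨α, β, γ, h⟩ := h
  set f := Ideal.Quotient.mk (Ideal.span {d}) with hf
  have hd : f d = 0 := Ideal.Quotient.eq_zero_iff_mem.2 (Ideal.mem_span_singleton_self d)
  have hc : IsCoprime (f b) (f s) := by
    refine ⟨f β, f γ, ?_⟩
    have := congrArg f h
    rwa [map_add, map_add, map_mul, hd, mul_zero, zero_add, map_mul, map_mul, map_one] at this
  obtain ⟨x, hx⟩ := exists_unit_add hc
  obtain ⟨x, rfl⟩ := Ideal.Quotient.mk_surjective x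
  obtain ⟨u, hu⟩ := hx.exists_right_inv
  obtain ⟨u, rfl⟩ := Ideal.Quotient.mk_surjective u
  refine ⟨x, ?_⟩
  change (f b + f s * f x) * f u = 1 at hu
  rw [← map_mul, ← map_add, ← map_mul, ← map_one f, Ideal.Quotient.mk_eq_mk_iff_sub_mem,
    Ideal.mem_span_singleton] at hu
  obtain ⟨c, hc⟩ := hu
  exact ⟨-c, u, by linear_combination hc⟩

section
variable {ι R : Type*} [Fintype ι] [DecidableEq ι] [CommRing R]

theorem rk_row_mem_E {w : ι → R} {p : ι} (hw : w p = 0) : rk (Pi.single p 1) w ∈ E ι R :=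
  rk_row_mem _ hw fun _ hm => el_mem hm.symm _

theorem rk_col_mem_E {v : ι → R} {p : ι} (hv : v p = 0) : rk v (Pi.single p 1) ∈ E ι R :=
  rk_col_mem _ hv _ fun _ hm => el_mem hm _

theorem rk_mulVec {v w : ι → R} (h : w ⬝ᵥ v = 0) (u : ι → R) :
    (rk v w : Matrix ι ι R) *ᵥ u = u + (w ⬝ᵥ u) • v := by
  rw [coe_rk h, add_mulVec, one_mulVec, vecMulVec_mulVec]
  simp

/-- `v` can be moved to the basis vector `e_o` by a product of elementary matrices. -/
def Red (o : ι) (v : ι → R) : Prop :=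
  ∃ e ∈ E ι R, (e : Matrix ι ι R) *ᵥ v = Pi.single o 1

theorem Red.of_mul {o : ι} {v : ι → R} {e : SpecialLinearGroup ι R} (he : e ∈ E ι R)
    (h : Red o ((e : Matrix ι ι R) *ᵥ v)) : Red o v := by
  obtain ⟨f, hf, hfv⟩ := h
  exact ⟨f * e, (E ι R).mul_mem hf he, by rw [coe_mul', ← mulVec_mulVec, hfv]⟩

theorem red_of_one {o : ι} {v : ι → R} (h : v o = 1) : Red o v := by
  have h0 : (Pi.single o 1 - v : ι → R) o = 0 := by simp [h]
  refine ⟨_, rk_col_mem_E h0, ?_⟩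
  rw [rk_mulVec (by rw [single_dotProduct, h0, mul_zero])]
  simp [h]

theorem red_of_coprime {o a b : ι} (hoa : o ≠ a) (hob : o ≠ b) {v : ι → R}
    (h : IsCoprime (v a) (v b)) : Red o v := by
  obtain ⟨α, β, h⟩ := h
  have h0 : ((1 - v o) • (Pi.single a α + Pi.single b β) : ι → R) o = 0 := by simp [hoa, hob]
  refine Red.of_mul (rk_row_mem_E h0) (red_of_one ?_)
  rw [rk_mulVec (by rw [dotProduct_single, h0, zero_mul])]
  simp only [smul_dotProduct, add_dotProduct, single_dotProduct, h]
  simp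

theorem red_of_ne_zero (hfin : ∀ d : R, d ≠ 0 → Finite (R ⧸ Ideal.span {d}))
    {o a b : ι} (hoa : o ≠ a) (hob : o ≠ b) (hab : a ≠ b) {v y : ι → R} (hy : y ⬝ᵥ v = 1)
    (ha : v a ≠ 0) : Red o v := by
  have := hfin _ ha
  set y' := y - (Pi.single a (y a) + Pi.single b (y b)) with hy'
  have hd : y' ⬝ᵥ v = 1 - (y a * v a + y b * v b) := by
    rw [hy', sub_dotProduct, hy, add_dotProduct, single_dotProduct, single_dotProduct]
  have hya : y' a = 0 := by simp [hy', hab]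
  have hyb : y' b = 0 := by simp [hy', hab.symm]
  obtain ⟨x, hx⟩ := exists_coprime_add (d := v a) (b := v b) (s := y' ⬝ᵥ v)
    ⟨y a, y b, 1, by rw [hd]; ring⟩
  have h0 : (x • y') b = 0 := by simp [hyb]
  refine Red.of_mul (rk_row_mem_E h0) (red_of_coprime hoa hob ?_)
  rw [rk_mulVec (by rw [dotProduct_single, h0, zero_mul])]
  simpa [hab, mul_comm] using hx

/-- Unimodular columns are in the elementary orbit of any basis vector. -/
theorem column_reduction [Nontrivial R] (hfin : ∀ d : R, d ≠ 0 → Finite (R ⧸ Ideal.span {d}))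
    {o a b : ι} (hoa : o ≠ a) (hob : o ≠ b) (hab : a ≠ b) {v y : ι → R} (hy : y ⬝ᵥ v = 1) :
    Red o v := by
  by_cases hva : v a = 0
  · obtain ⟨j, hj⟩ : ∃ j, v j ≠ 0 := by
      by_contra! h0
      have : v = 0 := funext h0
      simp [this] at hy
    have hja : j ≠ a := by rintro rfl; exact hj hva
    have e1 : (el a j (1 : R) : Matrix ι ι R) *ᵥ v = v + Pi.single a (v j) := by
      rw [el, rk_mulVec (by simp [hja])]
      simp [← Pi.single_smul]
    refine Red.of_mul (el_mem hja.symm 1)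
      (red_of_ne_zero hfin hoa hob hab
        (y := y ᵥ* ((el a j (1 : R))⁻¹ : SpecialLinearGroup ι R)) ?_ ?_)
    · rw [dotProduct_mulVec, vecMul_vecMul, coe_inv_mul_coe, vecMul_one, hy]
    · rw [e1]; simpa [hva] using hj
  · exact red_of_ne_zero hfin hoa hob hab hy hva

/-- Up to elementary matrices, a matrix in `SL` fixes the basis vector and covector of index `o`. -/
theorem exists_reduced [Nontrivial R] (hfin : ∀ d : R, d ≠ 0 → Finite (R ⧸ Ideal.span {d}))
    {o a b : ι} (hoa : o ≠ a) (hob : o ≠ b) (hab : a ≠ b) (g : SpecialLinearGroup ι R) :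
    ∃ e₁ ∈ E ι R, ∃ e₂ ∈ E ι R, ((e₁ * g * e₂ : SpecialLinearGroup ι R) : Matrix ι ι R) o o = 1 ∧
      ∀ i, i ≠ o → ((e₁ * g * e₂ : SpecialLinearGroup ι R) : Matrix ι ι R) i o = 0 ∧
        ((e₁ * g * e₂ : SpecialLinearGroup ι R) : Matrix ι ι R) o i = 0 := by
  have hy : (Pi.single o (1 : R) ᵥ* ((g⁻¹ : SpecialLinearGroup ι R) : Matrix ι ι R)) ⬝ᵥ
      ((g : Matrix ι ι R) *ᵥ Pi.single o 1) = 1 := by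
    rw [dotProduct_mulVec, vecMul_vecMul, coe_inv_mul_coe, vecMul_one]; simp
  obtain ⟨e₁, he₁, h1⟩ := column_reduction hfin hoa hob hab hy
  rw [mulVec_mulVec, ← coe_mul'] at h1
  set M := e₁ * g with hM
  have hcol : ∀ i, (M : Matrix ι ι R) i o = (Pi.single o 1 : ι → R) i := by
    intro i; rw [← h1]; simp
  set w : ι → R := Pi.single o 1 - (M : Matrix ι ι R) o with hw
  have hwo : w o = 0 := by simp [hw, hcol]
  have hM2 : ((M * rk (Pi.single o 1) w : SpecialLinearGroup ι R) : Matrix ι ι R) =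
      M + vecMulVec (Pi.single o 1) w := by
    rw [coe_mul', coe_rk (by rw [dotProduct_single, hwo, zero_mul]), mul_add, mul_one,
      mul_vecMulVec, h1]
  refine ⟨e₁, he₁, _, rk_row_mem_E hwo, ?_⟩
  rw [hM2]
  refine ⟨by simp [vecMulVec_apply, hwo, hcol], fun i hi => ⟨?_, ?_⟩⟩
  · simp [vecMulVec_apply, hcol, hi]
  · simp [vecMulVec_apply, hw, hi]

/-- Transfer of finite index along a homomorphism that is onto modulo the elementary subgroup. -/
theorem finiteIndex_E_of_hom {ι' : Type*} [Fintype ι'] [DecidableEq ι'] (h3 : Third ι')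
    (φ : SpecialLinearGroup ι R →* SpecialLinearGroup ι' R)
    (hφ : ∀ i j x, i ≠ j → φ (el i j x) ∈ E ι' R)
    (hs : ∀ g, ∃ e₁ ∈ E ι' R, ∃ e₂ ∈ E ι' R, ∃ h, e₁ * g * e₂ = φ h)
    (hE : (E ι R).FiniteIndex) : (E ι' R).FiniteIndex := by
  have hn := E_normal (R := R) h3
  set ψ := (QuotientGroup.mk' (E ι' R)).comp φ with hψ
  have hsur : Function.Surjective ψ := by
    intro q
    obtain ⟨g, rfl⟩ := QuotientGroup.mk'_surjective _ q
    obtain ⟨e₁, h1, e₂, h2, h, hh⟩ := hs g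
    refine ⟨h, ?_⟩
    rw [hψ, MonoidHom.comp_apply, ← hh, map_mul, map_mul]
    have a1 : QuotientGroup.mk' (E ι' R) e₁ = 1 := (QuotientGroup.eq_one_iff _).2 h1
    have a2 : QuotientGroup.mk' (E ι' R) e₂ = 1 := (QuotientGroup.eq_one_iff _).2 h2
    rw [a1, a2, one_mul, mul_one]
  have hker : E ι R ≤ ψ.ker := by
    rw [E, Subgroup.closure_le]
    rintro _ ⟨i, j, x, hij, rfl⟩
    exact (QuotientGroup.eq_one_iff _).2 (hφ i j x hij)
  have : ψ.ker.FiniteIndex := Subgroup.finiteIndex_of_le hker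
  have : Finite (SpecialLinearGroup ι R ⧸ ψ.ker) := inferInstance
  have : Finite (SpecialLinearGroup ι' R ⧸ E ι' R) :=
    Finite.of_equiv _ (QuotientGroup.quotientKerEquivOfSurjective ψ hsur).toEquiv
  exact Subgroup.finiteIndex_of_finite_quotient

/-- The block matrix with blocks `1` and `A`. -/
def consMat {n : ℕ} (A : Matrix (Fin n) (Fin n) R) : Matrix (Fin (n + 1)) (Fin (n + 1)) R :=
  of (Fin.cons (Fin.cons 1 0) (fun i => Fin.cons 0 (A i)))

theorem det_consMat {n : ℕ} (A : Matrix (Fin n) (Fin n) R) : (consMat A).det = A.det := by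
  rw [det_succ_column_zero, Fin.sum_univ_succ, Finset.sum_eq_zero]
  · simp only [Fin.val_zero, pow_zero, one_mul, add_zero]
    change 1 * _ = _
    rw [one_mul]
    rfl
  · intro i _
    simp [consMat]

variable (R) in
/-- The embedding `SL_n → SL_{n+1}`, adding a `1` as first diagonal entry. -/
def embSucc (n : ℕ) : SpecialLinearGroup (Fin n) R →* SpecialLinearGroup (Fin (n + 1)) R where
  toFun g := ⟨consMat g, by rw [det_consMat, g.det_coe]⟩
  map_one' := by
    apply sl_ext
    ext i j
    change consMat (1 : Matrix (Fin n) (Fin n) R) i j = (1 : Matrix _ _ R) i j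
    refine Fin.cases ?_ (fun i => ?_) i <;> refine Fin.cases ?_ (fun j => ?_) j <;>
      simp [consMat, one_apply, Fin.succ_ne_zero, (Fin.succ_ne_zero _).symm]
  map_mul' g h := by
    apply sl_ext
    ext i j
    change consMat ((g : Matrix (Fin n) (Fin n) R) * (h : Matrix (Fin n) (Fin n) R)) i j =
      (consMat (g : Matrix (Fin n) (Fin n) R) * consMat (h : Matrix (Fin n) (Fin n) R)) i j
    refine Fin.cases ?_ (fun i => ?_) i <;> refine Fin.cases ?_ (fun j => ?_) j <;>
      simp [consMat, mul_apply, Fin.sum_univ_succ]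

theorem embSucc_el {n : ℕ} {i j : Fin n} (h : i ≠ j) (x : R) :
    embSucc R n (el i j x) = el i.succ j.succ x := by
  apply sl_ext
  rw [coe_el (by simpa using h)]
  change consMat (el i j x : Matrix (Fin n) (Fin n) R) = _
  rw [coe_el h]
  ext a b
  refine Fin.cases ?_ (fun a => ?_) a <;> refine Fin.cases ?_ (fun b => ?_) b <;>
      simp [consMat, one_apply, Fin.succ_ne_zero, (Fin.succ_ne_zero _).symm, single_apply]

theorem third_fin {n : ℕ} (hn : 3 ≤ n) : Third (Fin n) := by
  intro p q
  by_contra! h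
  have : (Finset.univ : Finset (Fin n)) ⊆ {p, q} := by
    intro l _
    by_cases hp : p = l
    · simp [hp]
    · simp [h l hp]
  have h2 := (Finset.card_le_card this).trans Finset.card_le_two
  simp at h2
  omega

theorem exists_embSucc [Nontrivial R] (hfin : ∀ d : R, d ≠ 0 → Finite (R ⧸ Ideal.span {d}))
    {n : ℕ} (hn : 2 ≤ n) (g : SpecialLinearGroup (Fin (n + 1)) R) :
    ∃ e₁ ∈ E (Fin (n + 1)) R, ∃ e₂ ∈ E (Fin (n + 1)) R, ∃ h, e₁ * g * e₂ = embSucc R n h := by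
  obtain ⟨e₁, h1, e₂, h2, hoo, h0⟩ := exists_reduced hfin (o := (0 : Fin (n + 1)))
    (a := ⟨1, by omega⟩) (b := ⟨2, by omega⟩) (by simp [Fin.ext_iff])
    (by simp [Fin.ext_iff]) (by simp [Fin.ext_iff]) g
  refine ⟨e₁, h1, e₂, h2, ?_⟩
  generalize e₁ * g * e₂ = M at *
  have hM : (M : Matrix (Fin (n + 1)) (Fin (n + 1)) R) =
      consMat ((M : Matrix (Fin (n + 1)) (Fin (n + 1)) R).submatrix Fin.succ Fin.succ) := by
    ext i j
    refine Fin.cases ?_ (fun i => ?_) i <;> refine Fin.cases ?_ (fun j => ?_) j <;>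
      simp [consMat, hoo, h0 _ (Fin.succ_ne_zero _)]
  have hd : ((M : Matrix (Fin (n + 1)) (Fin (n + 1)) R).submatrix Fin.succ Fin.succ).det = 1 := by
    rw [← det_consMat, ← hM, M.det_coe]
  exact ⟨⟨_, hd⟩, sl_ext hM⟩

theorem finiteIndex_E_of_three [Nontrivial R]
    (hfin : ∀ d : R, d ≠ 0 → Finite (R ⧸ Ideal.span {d}))
    (h : (E (Fin 3) R).FiniteIndex) {n : ℕ} (hn : 3 ≤ n) : (E (Fin n) R).FiniteIndex := by
  induction n, hn using Nat.le_induction with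
  | base => exact h
  | succ n hn ih =>
    exact finiteIndex_E_of_hom (third_fin (by omega)) (embSucc R n)
      (fun i j x hij => by rw [embSucc_el hij]; exact el_mem (by simpa using hij) x)
      (exists_embSucc hfin (by omega)) ih

end

/-! ### Mennicke symbols and the quotient `SL₃ / E₃` -/

section
variable {R : Type*} [CommRing R]

theorem third3 : Third (Fin 3) := third_fin le_rfl

instance : (E (Fin 3) R).Normal := E_normal third3

variable (R) in
/-- The map `SL_2 → SL_3 / E_3`. -/
noncomputable def mphi : SpecialLinearGroup (Fin 2) R →* SpecialLinearGroup (Fin 3) R ⧸ E (Fin 3) R :=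
  (QuotientGroup.mk' (E (Fin 3) R)).comp (embSucc R 2)

theorem mk_E {g : SpecialLinearGroup (Fin 3) R} (h : g ∈ E (Fin 3) R) :
    QuotientGroup.mk' (E (Fin 3) R) g = 1 := (QuotientGroup.eq_one_iff _).2 h

theorem mphi_el {i j : Fin 2} (h : i ≠ j) (x : R) : mphi R (el i j x) = 1 := by
  rw [mphi, MonoidHom.comp_apply, embSucc_el h]
  exact mk_E (el_mem (by simpa using h) x)

theorem coe_embSucc (g : SpecialLinearGroup (Fin 2) R) :
    (embSucc R 2 g : Matrix (Fin 3) (Fin 3) R) =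
      !![1, 0, 0; 0, g.1 0 0, g.1 0 1; 0, g.1 1 0, g.1 1 1] := by
  ext i j
  fin_cases i <;> fin_cases j <;> rfl

/-- Every rank-one unipotent of `SL_2` becomes elementary in `SL_3`. -/
theorem mphi_rk {v w : Fin 2 → R} (h : w ⬝ᵥ v = 0) : mphi R (rk v w) = 1 := by
  rw [mphi, MonoidHom.comp_apply]
  have h' : (Fin.cons 0 w : Fin 3 → R) ⬝ᵥ (Fin.cons 0 v : Fin 3 → R) = 0 := by
    simpa [dotProduct, Fin.sum_univ_succ] using h
  have e : embSucc R 2 (rk v w) = rk (Fin.cons 0 v : Fin 3 → R) (Fin.cons 0 w : Fin 3 → R) := by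
    apply sl_ext
    rw [coe_rk h']
    change consMat (rk v w : Matrix (Fin 2) (Fin 2) R) = _
    rw [coe_rk h]
    ext a b
    refine Fin.cases ?_ (fun a => ?_) a <;> refine Fin.cases ?_ (fun b => ?_) b <;>
      simp [consMat, one_apply, Fin.succ_ne_zero, (Fin.succ_ne_zero _).symm, vecMulVec_apply]
  rw [e, ← comm_rk (l := 0) h' rfl rfl]
  apply mk_E
  have h1 : rk (Fin.cons 0 v : Fin 3 → R) (Pi.single 0 1) ∈ E (Fin 3) R := rk_col_mem_E rfl
  have h2 : rk (Pi.single 0 1) (Fin.cons 0 w : Fin 3 → R) ∈ E (Fin 3) R := rk_row_mem_E rfl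
  rw [commutatorElement_def]
  exact Subgroup.mul_mem _ (Subgroup.mul_mem _ (Subgroup.mul_mem _ h1 h2)
    (Subgroup.inv_mem _ h1)) (Subgroup.inv_mem _ h2)

theorem coe_el01 (x : R) : (el (0 : Fin 2) 1 x : Matrix (Fin 2) (Fin 2) R) = !![1, x; 0, 1] := by
  rw [coe_el (by decide)]
  ext i j
  fin_cases i <;> fin_cases j <;> simp [single_apply]

theorem coe_el10 (x : R) : (el (1 : Fin 2) 0 x : Matrix (Fin 2) (Fin 2) R) = !![1, 0; x, 1] := by
  rw [coe_el (by decide)]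
  ext i j
  fin_cases i <;> fin_cases j <;> simp [single_apply]

theorem det2 (M : SpecialLinearGroup (Fin 2) R) : M.1 0 0 * M.1 1 1 - M.1 0 1 * M.1 1 0 = 1 := by
  have := M.det_coe
  rwa [det_fin_two] at this

theorem eta2 (M : SpecialLinearGroup (Fin 2) R) :
    (M : Matrix (Fin 2) (Fin 2) R) = !![M.1 0 0, M.1 0 1; M.1 1 0, M.1 1 1] :=
  Matrix.eta_fin_two _

theorem mphi_of_one (M : SpecialLinearGroup (Fin 2) R) (h : M.1 0 0 = 1) : mphi R M = 1 := by
  have e : M = el 1 0 (M.1 1 0) * el 0 1 (M.1 0 1) := by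
    apply sl_ext
    have := det2 M
    have h4 : M.1 1 1 = M.1 1 0 * M.1 0 1 + 1 := by
      rw [h] at this
      linear_combination this
    rw [coe_mul', coe_el01, coe_el10, mul_fin_two]
    ext i j
    fin_cases i <;> fin_cases j <;> simp [h, h4]
  rw [e, map_mul, mphi_el (by decide), mphi_el (by decide), one_mul]

/-- `Men a b q`: the element `q` is the Mennicke symbol with first row `(a, b)`. -/
def Men (a b : R) (q : SpecialLinearGroup (Fin 3) R ⧸ E (Fin 3) R) : Prop :=
  ∃ M : SpecialLinearGroup (Fin 2) R, M.1 0 0 = a ∧ M.1 0 1 = b ∧ mphi R M = q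

/-- The image of a matrix in `SL₃ / E₃` depends only on its first row. -/
theorem Men.unique {a b : R} {q q'} (h : Men a b q) (h' : Men a b q') : q = q' := by
  obtain ⟨M, h1, h2, rfl⟩ := h
  obtain ⟨M', h1', h2', rfl⟩ := h'
  rw [← mul_inv_eq_one, ← map_inv, ← map_mul]
  apply mphi_of_one
  have e : ((M * M'⁻¹ : SpecialLinearGroup (Fin 2) R) : Matrix (Fin 2) (Fin 2) R) =
      (M : Matrix (Fin 2) (Fin 2) R) * adjugate (M' : Matrix (Fin 2) (Fin 2) R) := rfl
  have := det2 M'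
  rw [e, adjugate_fin_two]
  simp [mul_apply, Fin.sum_univ_two, h1, h2]
  rw [← h1', ← h2']
  linear_combination this

theorem Men.add_right {a b : R} {q} (h : Men a b q) (x : R) : Men a (b + a * x) q := by
  obtain ⟨M, h1, h2, rfl⟩ := h
  refine ⟨M * el 0 1 x, ?_, ?_, ?_⟩
  · rw [coe_mul', coe_el01, eta2 M, mul_fin_two]; simp [h1]
  · rw [coe_mul', coe_el01, eta2 M, mul_fin_two]; simp [h1, h2, add_comm]
  · rw [map_mul, mphi_el (by decide), mul_one]

theorem Men.add_left {a b : R} {q} (h : Men a b q) (x : R) : Men (a + b * x) b q := by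
  obtain ⟨M, h1, h2, rfl⟩ := h
  refine ⟨M * el 1 0 x, ?_, ?_, ?_⟩
  · rw [coe_mul', coe_el10, eta2 M, mul_fin_two]; simp [h1, h2]
  · rw [coe_mul', coe_el10, eta2 M, mul_fin_two]; simp [h2]
  · rw [map_mul, mphi_el (by decide), mul_one]

theorem Men.coprime {a b : R} {q} (h : Men a b q) : ∃ α β, a * α - b * β = 1 := by
  obtain ⟨M, rfl, rfl, rfl⟩ := h
  exact ⟨_, _, det2 M⟩

theorem Men.eq_one {b : R} {q} (h : Men 1 b q) : q = 1 := by
  obtain ⟨M, h1, h2, rfl⟩ := h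
  exact mphi_of_one M h1

theorem Men.eq_one_of_zero {a : R} {q} (h : Men a 0 q) : q = 1 := by
  obtain ⟨α, β, h1⟩ := h.coprime
  have h2 := (h.add_right (α * 1)).add_left (1 - a)
  have e1 : 0 + a * (α * 1) = 1 := by linear_combination h1
  rw [e1, show a + 1 * (1 - a) = 1 by ring] at h2
  exact h2.eq_one

/-- An upper triangular matrix is trivial in `SL_3 / E_3`. -/
theorem mphi_upper (M : SpecialLinearGroup (Fin 2) R) (h : M.1 1 0 = 0) : mphi R M = 1 := by
  have h0 : Men (M.1 0 0) (M.1 0 1) (mphi R M) := ⟨M, rfl, rfl, rfl⟩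
  have hd := det2 M
  rw [h] at hd
  have h1 := h0.add_right (-M.1 1 1 * M.1 0 1)
  have e : M.1 0 1 + M.1 0 0 * (-M.1 1 1 * M.1 0 1) = 0 := by
    linear_combination (-M.1 0 1) * hd
  rw [e] at h1
  exact h1.eq_one_of_zero

theorem coe_el3_01 (x : R) :
    (el (0 : Fin 3) 1 x : Matrix (Fin 3) (Fin 3) R) = !![1, x, 0; 0, 1, 0; 0, 0, 1] := by
  rw [coe_el (by decide)]
  ext i j
  fin_cases i <;> fin_cases j <;> simp [single_apply]
theorem coe_el3_02 (x : R) :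
    (el (0 : Fin 3) 2 x : Matrix (Fin 3) (Fin 3) R) = !![1, 0, x; 0, 1, 0; 0, 0, 1] := by
  rw [coe_el (by decide)]
  ext i j
  fin_cases i <;> fin_cases j <;> simp [single_apply]
theorem coe_el3_10 (x : R) :
    (el (1 : Fin 3) 0 x : Matrix (Fin 3) (Fin 3) R) = !![1, 0, 0; x, 1, 0; 0, 0, 1] := by
  rw [coe_el (by decide)]
  ext i j
  fin_cases i <;> fin_cases j <;> simp [single_apply]
theorem coe_el3_12 (x : R) :
    (el (1 : Fin 3) 2 x : Matrix (Fin 3) (Fin 3) R) = !![1, 0, 0; 0, 1, x; 0, 0, 1] := by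
  rw [coe_el (by decide)]
  ext i j
  fin_cases i <;> fin_cases j <;> simp [single_apply]
theorem coe_el3_20 (x : R) :
    (el (2 : Fin 3) 0 x : Matrix (Fin 3) (Fin 3) R) = !![1, 0, 0; 0, 1, 0; x, 0, 1] := by
  rw [coe_el (by decide)]
  ext i j
  fin_cases i <;> fin_cases j <;> simp [single_apply]
theorem coe_el3_21 (x : R) :
    (el (2 : Fin 3) 1 x : Matrix (Fin 3) (Fin 3) R) = !![1, 0, 0; 0, 1, 0; 0, x, 1] := by
  rw [coe_el (by decide)]
  ext i j
  fin_cases i <;> fin_cases j <;> simp [single_apply]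

theorem exists_swap12 : ∃ g ∈ E (Fin 3) R,
    (g : Matrix (Fin 3) (Fin 3) R) = !![1, 0, 0; 0, 0, -1; 0, 1, 0] :=
  ⟨el 1 2 (-1) * el 2 1 1 * el 1 2 (-1), Subgroup.mul_mem _ (Subgroup.mul_mem _
    (el_mem (by decide) _) (el_mem (by decide) _)) (el_mem (by decide) _), by
    rw [coe_mul', coe_mul', coe_el3_12, coe_el3_21]
    simp [Matrix.mul_fin_three]⟩

theorem exists_swap02 : ∃ g ∈ E (Fin 3) R,
    (g : Matrix (Fin 3) (Fin 3) R) = !![0, 0, 1; 0, 1, 0; -1, 0, 0] :=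
  ⟨el 0 2 1 * el 2 0 (-1) * el 0 2 1, Subgroup.mul_mem _ (Subgroup.mul_mem _
    (el_mem (by decide) _) (el_mem (by decide) _)) (el_mem (by decide) _), by
    rw [coe_mul', coe_mul', coe_el3_02, coe_el3_20]
    simp [Matrix.mul_fin_three]⟩

/-- Mennicke's relation: two symbols with the same first entry multiply, in `SL₃ / E₃`, through an
explicit identity of `3 × 3` matrices. -/
theorem Men.mul {a b₁ b₂ : R} {q₁ q₂} (h₁ : Men a b₁ q₁) (h₂ : Men a b₂ q₂) :
    Men a (-(b₁ * b₂)) (q₁ * q₂) := by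
  obtain ⟨M₁, ha, hb, rfl⟩ := h₁
  obtain ⟨M₂, ha', hb', rfl⟩ := h₂
  have d1 := det2 M₁
  have d2 := det2 M₂
  have f1 := coe_embSucc M₁
  have f2 := coe_embSucc M₂
  rw [ha, hb] at d1 f1
  rw [ha', hb'] at d2 f2
  set c₁ := M₁.1 1 0
  set d₁ := M₁.1 1 1
  set c₂ := M₂.1 1 0
  set d₂ := M₂.1 1 1
  obtain ⟨S, hS, eS⟩ := exists_swap12 (R := R)
  obtain ⟨T, hT, eT⟩ := exists_swap02 (R := R)
  let M₃ : SpecialLinearGroup (Fin 2) R := ⟨!![a, -(b₁ * b₂); c₁ * c₂, d₂ - c₂ * d₁ * b₂], by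
    rw [det_fin_two]
    simp
    linear_combination d2 - b₂ * c₂ * d1⟩
  have f3 : (embSucc R 2 M₃ : Matrix (Fin 3) (Fin 3) R) =
      !![1, 0, 0; 0, a, -(b₁ * b₂); 0, c₁ * c₂, d₂ - c₂ * d₁ * b₂] := coe_embSucc M₃
  have key : T * el 0 2 (-c₂) * embSucc R 2 M₁ * (S * T) * embSucc R 2 M₂ =
      embSucc R 2 M₃ * (el 0 2 (-(d₁ * b₂)) * el 0 1 c₁ * el 1 0 b₁ * (T * S * T)) := by
    apply sl_ext
    simp only [coe_mul', coe_el3_01, coe_el3_02, coe_el3_10, eS, eT, f1, f2, f3,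
      Matrix.mul_fin_three]
    ext i j
    fin_cases i <;> fin_cases j <;> simp <;> grind
  refine ⟨M₃, rfl, rfl, ?_⟩
  have := congrArg (QuotientGroup.mk' (E (Fin 3) R)) key
  simp only [map_mul, mk_E hS, mk_E hT, mk_E (el_mem (show (0 : Fin 3) ≠ 2 by decide) _),
    mk_E (el_mem (show (0 : Fin 3) ≠ 1 by decide) _),
    mk_E (el_mem (show (1 : Fin 3) ≠ 0 by decide) _), one_mul, mul_one] at this
  exact this.symm

theorem Men.pow {a b : R} {q} (h : Men a b q) (k : ℕ) :
    Men a (-(-b) ^ (k + 1)) (q ^ (k + 1)) := by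
  induction k with
  | zero => simpa using h
  | succ k ih =>
    have := ih.mul h
    rw [pow_succ q, pow_succ (-b)]
    convert this using 1
    ring

/-- If `(-b) ^ k ≡ 1` modulo `a`, the `k`-th power of the symbol of `(a, b)` is the symbol of
`(a, -1)`, which is trivial. -/
theorem Men.torsion {a b : R} {q} (h : Men a b q) [Finite (R ⧸ Ideal.span {a})] :
    ∃ k : ℕ, 0 < k ∧ q ^ k = 1 := by
  obtain ⟨α, β, hab⟩ := h.coprime
  set f := Ideal.Quotient.mk (Ideal.span {a}) with hf
  have hfa : f a = 0 := Ideal.Quotient.eq_zero_iff_mem.2 (Ideal.mem_span_singleton_self a)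
  have hu : f (-b) * f β = 1 := by
    have := congrArg f hab
    rw [map_sub, map_mul, hfa, zero_mul, zero_sub, map_mul, map_one] at this
    rw [map_neg, neg_mul, this]
  set u : (R ⧸ Ideal.span {a})ˣ := ⟨f (-b), f β, hu, by rw [mul_comm, hu]⟩ with hu'
  obtain ⟨k, hk, hk1⟩ := (isOfFinOrder_of_finite u).exists_pow_eq_one
  refine ⟨k, hk, ?_⟩
  have hk2 : f ((-b) ^ k) = f 1 := by
    have := congrArg Units.val hk1
    rw [map_pow, map_one]
    simpa [hu'] using this
  rw [Ideal.Quotient.mk_eq_mk_iff_sub_mem, Ideal.mem_span_singleton] at hk2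
  obtain ⟨c, hc⟩ := hk2
  obtain ⟨k, rfl⟩ : ∃ k', k = k' + 1 := ⟨k - 1, by omega⟩
  have h2 := ((h.pow k).add_right c).add_left (a - 1)
  rw [show -(-b) ^ (k + 1) + a * c = -1 by linear_combination -hc,
    show a + -1 * (a - 1) = 1 by ring] at h2
  exact h2.eq_one

theorem men_row (M : SpecialLinearGroup (Fin 2) R) : Men (M.1 0 0) (M.1 0 1) (mphi R M) :=
  ⟨M, rfl, rfl, rfl⟩

theorem mphi_torsion [Nontrivial R] (hfin : ∀ d : R, d ≠ 0 → Finite (R ⧸ Ideal.span {d}))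
    (M : SpecialLinearGroup (Fin 2) R) : ∃ k : ℕ, 0 < k ∧ mphi R M ^ k = 1 := by
  have h := men_row M
  by_cases h0 : M.1 0 0 = 0
  · have h1 := h.add_left 1
    have hb : M.1 0 0 + M.1 0 1 * 1 ≠ 0 := by
      intro hb
      have hd := det2 M
      rw [h0, zero_add, mul_one] at hb
      simp [h0, hb] at hd
    have := hfin _ hb
    exact h1.torsion
  · have := hfin _ h0
    exact h.torsion

/-- Row operations give any two symbols a common first entry, after which Mennicke's relation is
symmetric in the two factors. -/
theorem mphi_comm (hfin : ∀ d : R, d ≠ 0 → Finite (R ⧸ Ideal.span {d}))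
    (M₁ M₂ : SpecialLinearGroup (Fin 2) R) : mphi R M₁ * mphi R M₂ = mphi R M₂ * mphi R M₁ := by
  have h1 := men_row M₁
  have h2 := men_row M₂
  set a := M₁.1 0 0
  set b := M₁.1 0 1
  set c := M₂.1 0 0
  set d := M₂.1 0 1
  by_cases hd : d = 0
  · rw [hd] at h2
    rw [h2.eq_one_of_zero, one_mul, mul_one]
  have := hfin d hd
  obtain ⟨α, β, hab⟩ := h1.coprime
  obtain ⟨x, u, w, hx⟩ := exists_coprime_add (d := d) (b := b) (s := a)
    ⟨0, -β, α, by linear_combination hab⟩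
  -- a common first entry for both rows, by the Chinese remainder theorem
  have h1' := (h1.add_right x).add_left ((c - a) * w)
  have h2' := h2.add_left (-(c - a) * u)
  have e : c + d * (-(c - a) * u) = a + (b + a * x) * ((c - a) * w) := by
    linear_combination (a - c) * hx
  rw [e] at h2'
  have k1 := h1'.mul h2'
  have k2 := h2'.mul h1'
  rw [mul_comm d] at k2
  exact k1.unique k2

/-- The quotient `SL₃ / E₃` is an abelian torsion group generated by the image of `F`. -/
theorem finiteIndex_E3 [Nontrivial R] (hfin : ∀ d : R, d ≠ 0 → Finite (R ⧸ Ideal.span {d}))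
    (F : Set (SpecialLinearGroup (Fin 2) R)) (hF : F.Finite)
    (U : Set (SpecialLinearGroup (Fin 2) R)) (hU : ∀ g ∈ U, mphi R g = 1)
    (hFU : Subgroup.closure (F ∪ U) = ⊤) : (E (Fin 3) R).FiniteIndex := by
  have hsur : Function.Surjective (mphi R) := by
    intro q
    obtain ⟨g, rfl⟩ := QuotientGroup.mk'_surjective _ q
    obtain ⟨e₁, h1, e₂, h2, h, hh⟩ := exists_embSucc hfin le_rfl g
    refine ⟨h, ?_⟩
    rw [mphi, MonoidHom.comp_apply, ← hh, map_mul, map_mul, mk_E h1, mk_E h2, one_mul, mul_one]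
  let _ : CommGroup (SpecialLinearGroup (Fin 3) R ⧸ E (Fin 3) R) :=
    { (inferInstance : Group (SpecialLinearGroup (Fin 3) R ⧸ E (Fin 3) R)) with
      mul_comm := by
        intro x y
        obtain ⟨x, rfl⟩ := hsur x
        obtain ⟨y, rfl⟩ := hsur y
        exact mphi_comm hfin x y }
  have hfg : Group.FG (SpecialLinearGroup (Fin 3) R ⧸ E (Fin 3) R) := by
    refine Group.fg_iff.2 ⟨mphi R '' F, ?_, hF.image _⟩
    rw [eq_top_iff]
    rintro q -
    obtain ⟨g, rfl⟩ := hsur q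
    have : g ∈ Subgroup.closure (F ∪ U) := hFU ▸ Subgroup.mem_top g
    induction this using Subgroup.closure_induction with
    | mem x hx =>
      rcases hx with hx | hx
      · exact Subgroup.subset_closure ⟨x, hx, rfl⟩
      · rw [hU x hx]; exact Subgroup.one_mem _
    | one => rw [map_one]; exact Subgroup.one_mem _
    | mul x y _ _ hx hy => rw [map_mul]; exact Subgroup.mul_mem _ hx hy
    | inv x _ hx => rw [map_inv]; exact Subgroup.inv_mem _ hx
  have hfinite : Finite (SpecialLinearGroup (Fin 3) R ⧸ E (Fin 3) R) := by
    apply CommGroup.finite_of_fg_isMulTorsion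
    intro q
    obtain ⟨g, rfl⟩ := hsur q
    exact isOfFinOrder_iff_pow_eq_one.2 (mphi_torsion hfin g)
  exact Subgroup.finiteIndex_of_finite_quotient
end

/-! ### Generation of `SL₂` by a division algorithm -/

section Generation
variable {R : Type*} [CommRing R]

/-- Matrices of determinant `m` congruent modulo `m` are in the same left `SL₂`-orbit. -/
theorem exists_sl_mul_eq [IsDomain R] {m : R} (hm : m ≠ 0) {X Y : Matrix (Fin 2) (Fin 2) R}
    (hX : X.det = m) (hY : Y.det = m) (h : ∀ i j, m ∣ X i j - Y i j) :
    ∃ g : SpecialLinearGroup (Fin 2) R, X = (g : Matrix (Fin 2) (Fin 2) R) * Y := by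
  choose D hD using h
  -- with `X - Y = m • D` and `adjugate Y * Y = m`, the quotient `X * Y⁻¹` is `1 + D * adjugate Y`
  have hXY : X = Y + m • Matrix.of D := by
    ext i j
    simp only [Matrix.add_apply, Matrix.smul_apply, Matrix.of_apply, smul_eq_mul, ← hD]
    ring
  have key : X = (1 + Matrix.of D * Y.adjugate) * Y := by
    rw [add_mul, one_mul, mul_assoc, adjugate_mul, hY, Matrix.mul_smul, mul_one, ← hXY]
  refine ⟨⟨1 + Matrix.of D * Y.adjugate, ?_⟩, key⟩
  have h1 := congrArg Matrix.det key
  rw [det_mul, hX, hY] at h1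
  exact mul_right_cancel₀ hm (by rw [one_mul, ← h1])

theorem sl_mul_cancel [IsDomain R] {m : R} (hm : m ≠ 0) {X : Matrix (Fin 2) (Fin 2) R}
    (hX : X.det = m) {A B : Matrix (Fin 2) (Fin 2) R} (h : A * X = B * X) : A = B := by
  have h1 : A * X * X.adjugate = B * X * X.adjugate := by rw [h]
  rw [mul_assoc, mul_assoc, mul_adjugate, hX, Matrix.mul_smul, Matrix.mul_smul, mul_one,
    mul_one] at h1
  ext i j
  have := congrFun (congrFun h1 i) j
  exact mul_left_cancel₀ hm this

/-- Right translation by `1 + m l e₁₂` of a matrix of determinant `m` is left translation by a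
rank one unipotent. -/
theorem exists_rk_mul {m : R} {W : Matrix (Fin 2) (Fin 2) R} (hW : W.det = m) (l : R) :
    ∃ v w : Fin 2 → R, w ⬝ᵥ v = 0 ∧
      W * !![1, m * l; 0, 1] = (rk v w : Matrix (Fin 2) (Fin 2) R) * W := by
  have h : ![-(l * W 1 0), l * W 0 0] ⬝ᵥ ![W 0 0, W 1 0] = 0 := by
    simp [dotProduct, Fin.sum_univ_succ]; ring
  refine ⟨![W 0 0, W 1 0], ![-(l * W 1 0), l * W 0 0], h, ?_⟩
  rw [coe_rk h]
  rw [det_fin_two] at hW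
  ext i j
  fin_cases i <;> fin_cases j <;>
    simp [Matrix.mul_apply, Fin.sum_univ_two, vecMulVec_apply, ← hW] <;> ring

/-- The upper triangular matrices and the rank one unipotents in `SL₂`; they all become trivial in
`SL₃ / E₃`. -/
def Triv (R : Type*) [CommRing R] : Set (SpecialLinearGroup (Fin 2) R) :=
  {g | g.1 1 0 = 0} ∪ {g | ∃ v w : Fin 2 → R, w ⬝ᵥ v = 0 ∧ g = rk v w}

theorem mphi_triv {g : SpecialLinearGroup (Fin 2) R} (h : g ∈ Triv R) : mphi R g = 1 := by
  rcases h with h | ⟨v, w, h, rfl⟩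
  · exact mphi_upper g h
  · exact mphi_rk h

open Classical in
/-- A representative of each residue class of matrices of determinant `m` modulo `m`, upper
triangular whenever the class contains such a matrix; the junk value is `0`. -/
noncomputable def rep (m : R) (c : Matrix (Fin 2) (Fin 2) (R ⧸ Ideal.span {m})) :
    Matrix (Fin 2) (Fin 2) R :=
  if h : ∃ W : Matrix (Fin 2) (Fin 2) R,
      (W.det = m ∧ W.map (Ideal.Quotient.mk _) = c) ∧ W 1 0 = 0 then h.choose
  else if h : ∃ W : Matrix (Fin 2) (Fin 2) R,
      W.det = m ∧ W.map (Ideal.Quotient.mk _) = c then h.choose else 0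

theorem rep_spec {m : R} {W : Matrix (Fin 2) (Fin 2) R} (hW : W.det = m) :
    (rep m (W.map (Ideal.Quotient.mk _))).det = m ∧
      (∀ i j, m ∣ W i j - rep m (W.map (Ideal.Quotient.mk _)) i j) := by
  have key : (rep m (W.map (Ideal.Quotient.mk (Ideal.span {m})))).det = m ∧
      (rep m (W.map (Ideal.Quotient.mk (Ideal.span {m})))).map
        (Ideal.Quotient.mk (Ideal.span {m})) = W.map (Ideal.Quotient.mk (Ideal.span {m})) := by
    unfold rep
    split_ifs with h1 h2
    · exact h1.choose_spec.1
    · exact h2.choose_spec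
    · exact absurd ⟨W, hW, rfl⟩ h2
  refine ⟨key.1, fun i j => ?_⟩
  have h := congrFun (congrFun key.2 i) j
  rw [← Ideal.mem_span_singleton, ← Ideal.Quotient.eq]
  exact h.symm

theorem rep_upper {m : R} {W : Matrix (Fin 2) (Fin 2) R} (hW : W.det = m) (h : W 1 0 = 0) :
    rep m (W.map (Ideal.Quotient.mk (Ideal.span {m}))) 1 0 = 0 := by
  unfold rep
  rw [dif_pos ⟨W, ⟨hW, rfl⟩, h⟩]
  exact (Exists.choose_spec (p := fun V : Matrix (Fin 2) (Fin 2) R => (V.det = m ∧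
    V.map (Ideal.Quotient.mk (Ideal.span {m})) =
      W.map (Ideal.Quotient.mk (Ideal.span {m}))) ∧ V 1 0 = 0) ⟨W, ⟨hW, rfl⟩, h⟩).2

/-- A Euclidean-type algorithm on the matrices of determinant `m`. The function `ν` is a
multiplicative size. Hypothesis `hcls` says that up to the controlled scalar `x / y` every nonzero
vector is the first column of a matrix of determinant `m`; hypothesis `happ` is a division
algorithm in which the dividend may first be multiplied by one of finitely many `t`. -/
theorem exists_finite_generation [IsDomain R]
    (hfin : ∀ d : R, d ≠ 0 → Finite (R ⧸ Ideal.span {d}))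
    (ν : R →* ℕ) (hν : ∀ x, x ≠ 0 → 0 < ν x) {m : R} (hm : m ≠ 0)
    (hcls : ∀ p : Fin 2 → R, p ≠ 0 → ∃ x y : R, y ≠ 0 ∧ ν x ≤ ν y * ν m ∧
      ∃ Z : Matrix (Fin 2) (Fin 2) R, Z.det = m ∧ ∀ i, x * p i = y * Z i 0)
    (T : Set R) (hT : T.Finite) (hT0 : ∀ t ∈ T, t ≠ 0)
    (happ : ∀ a b : R, b ≠ 0 → ∃ q, ∃ t ∈ T, ν m * ν (t * a - q * b) < ν b) :
    ∃ F : Set (SpecialLinearGroup (Fin 2) R), F.Finite ∧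
      Subgroup.closure (F ∪ Triv R) = ⊤ := by
  classical
  have hcol : ∀ (X : Matrix (Fin 2) (Fin 2) R) (t q : R), X.det = m → t ≠ 0 →
      ∃ Z : Matrix (Fin 2) (Fin 2) R, Z.det = m ∧ ∃ x y : R, y ≠ 0 ∧ ν x ≤ ν y * ν m ∧
        ∀ i, x * (t * X i 1 - q * X i 0) = y * Z i 0 := by
    intro X t q hX ht
    have hp : (fun i => t * X i 1 - q * X i 0) ≠ 0 := by
      intro h0
      have e0 : t * X 0 1 - q * X 0 0 = 0 := congrFun h0 0
      have e1 : t * X 1 1 - q * X 1 0 = 0 := congrFun h0 1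
      rw [det_fin_two] at hX
      apply mul_ne_zero ht hm
      rw [← hX]
      linear_combination X 0 0 * e1 - X 1 0 * e0
    obtain ⟨x, y, hy, hxy, Z, hZ, h⟩ := hcls _ hp
    exact ⟨Z, hZ, x, y, hy, hxy, h⟩
  choose! col hcoldet hcolprop using hcol
  have fm := hfin m hm
  have frep : (Set.range (rep m)).Finite := Set.finite_range _
  -- the matrices that can occur in one step of the descent, up to left translation
  let S : Set (Matrix (Fin 2) (Fin 2) R) := Set.range (rep m) ∪
    ⋃ X ∈ Set.range (rep m), ⋃ t ∈ T,
      Set.range fun c : R ⧸ Ideal.span {t * m} => col X t c.out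
  have fS : S.Finite := by
    refine frep.union (frep.biUnion fun X _ => hT.biUnion fun t ht => ?_)
    have := hfin (t * m) (mul_ne_zero (hT0 t ht) hm)
    exact Set.finite_range _
  let F : Set (SpecialLinearGroup (Fin 2) R) :=
    ⋃ X ∈ S, ⋃ Y ∈ S, {g | X.det = m ∧ (g : Matrix (Fin 2) (Fin 2) R) * X = Y}
  have fF : F.Finite := by
    refine fS.biUnion fun X _ => fS.biUnion fun Y _ => Set.Subsingleton.finite ?_
    rintro g ⟨hX, hg⟩ h ⟨-, hh⟩
    exact sl_ext (sl_mul_cancel hm hX (hg.trans hh.symm))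
  refine ⟨F, fF, ?_⟩
  set Δ := Subgroup.closure (F ∪ Triv R) with hΔ
  have hFΔ : ∀ g ∈ F, g ∈ Δ := fun g hg => Subgroup.subset_closure (Or.inl hg)
  have hUΔ : ∀ g ∈ Triv R, g ∈ Δ := fun g hg => Subgroup.subset_closure (Or.inr hg)
  have hup : ∀ W : Matrix (Fin 2) (Fin 2) R, W.det = m → W 1 0 = 0 →
      ∃ g ∈ Δ, ∃ X ∈ Set.range (rep m), X.det = m ∧
        W = (g : Matrix (Fin 2) (Fin 2) R) * X := by
    intro W hW h0
    obtain ⟨hd, hc⟩ := rep_spec hW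
    obtain ⟨g, hg⟩ := exists_sl_mul_eq hm hW hd hc
    refine ⟨g, hUΔ g (Or.inl ?_), _, ⟨_, rfl⟩, hd, hg⟩
    have hr := rep_upper hW h0
    generalize rep m (W.map (Ideal.Quotient.mk (Ideal.span {m}))) = X at *
    have h1 : X 0 0 ≠ 0 := by
      intro h
      rw [det_fin_two, h, hr] at hd
      apply hm; rw [← hd]; ring
    have h2 := congrFun (congrFun hg 1) 0
    rw [h0, Matrix.mul_apply, Fin.sum_univ_two, hr, mul_zero, add_zero] at h2
    exact (mul_eq_zero.1 h2.symm).resolve_right h1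
  have good : ∀ (N : ℕ) (W : Matrix (Fin 2) (Fin 2) R), W.det = m → ν (W 1 0) = N →
      ∃ g ∈ Δ, ∃ X ∈ Set.range (rep m), X.det = m ∧
        W = (g : Matrix (Fin 2) (Fin 2) R) * X := by
    intro N
    induction N using Nat.strong_induction_on with
    | _ N ih =>
    intro W hW hN
    by_cases h0 : W 1 0 = 0
    · exact hup W hW h0
    obtain ⟨q₀, t, ht, hlt⟩ := happ (W 1 1) (W 1 0) h0
    have ht0 := hT0 t ht
    -- replace `q₀` by the representative `q` of its class modulo `t * m`
    obtain ⟨l, hl⟩ : ∃ l, (Ideal.Quotient.mk (Ideal.span {t * m}) q₀).out = q₀ + t * m * l := by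
      have : (Ideal.Quotient.mk (Ideal.span {t * m}) q₀).out - q₀ ∈ Ideal.span {t * m} := by
        rw [← Ideal.Quotient.eq]
        exact Quotient.out_eq _
      obtain ⟨l, hl⟩ := Ideal.mem_span_singleton.1 this
      exact ⟨l, by rw [← hl]; ring⟩
    set c := Ideal.Quotient.mk (Ideal.span {t * m}) q₀
    obtain ⟨v, w, hvw, hW'⟩ := exists_rk_mul hW l
    set W' := W * !![1, m * l; 0, 1] with hW'def
    have hW'det : W'.det = m := by
      rw [hW'def, det_mul, hW, det_fin_two_of]; ring
    have e10 : W' 1 0 = W 1 0 := by simp [hW'def, Matrix.mul_apply, Fin.sum_univ_two]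
    have e11 : W' 1 1 = W 1 0 * (m * l) + W 1 1 := by
      simp [hW'def, Matrix.mul_apply, Fin.sum_univ_two]
    obtain ⟨hd, hc⟩ := rep_spec hW'det
    obtain ⟨γ, hγ⟩ := exists_sl_mul_eq hm hW'det hd hc
    set X := rep m (W'.map (Ideal.Quotient.mk (Ideal.span {m}))) with hX
    have hXmem : X ∈ Set.range (rep m) := ⟨_, rfl⟩
    set Z := col X t c.out with hZ
    have hZdet : Z.det = m := hcoldet X t _ hd ht0
    obtain ⟨x, y, hy, hxy, hp⟩ := hcolprop X t c.out hd ht0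
    have hrel : x * (t * W' 1 1 - c.out * W' 1 0) =
        y * ((γ : Matrix (Fin 2) (Fin 2) R) * Z) 1 0 := by
      rw [hγ]
      simp only [Matrix.mul_apply, Fin.sum_univ_two]
      linear_combination (γ.1 1 0) * hp 0 + (γ.1 1 1) * hp 1
    have hval : t * W' 1 1 - c.out * W' 1 0 = t * W 1 1 - q₀ * W 1 0 := by
      rw [e10, e11, hl]; ring
    rw [hval] at hrel
    -- the descent: `γ * Z` has determinant `m` and a smaller lower left entry than `W`
    have hsmall : ν (((γ : Matrix (Fin 2) (Fin 2) R) * Z) 1 0) < N := by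
      have h1 := congrArg ν hrel
      rw [map_mul, map_mul] at h1
      refine lt_of_mul_lt_mul_left (a := ν y) ?_ (Nat.zero_le _)
      calc ν y * ν (((γ : Matrix (Fin 2) (Fin 2) R) * Z) 1 0)
          = ν x * ν (t * W 1 1 - q₀ * W 1 0) := h1.symm
        _ ≤ ν y * ν m * ν (t * W 1 1 - q₀ * W 1 0) := Nat.mul_le_mul_right _ hxy
        _ = ν y * (ν m * ν (t * W 1 1 - q₀ * W 1 0)) := mul_assoc _ _ _
        _ < ν y * N := Nat.mul_lt_mul_of_pos_left (hN ▸ hlt) (hν y hy)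
    obtain ⟨g, hg, X', hX', hX'det, he⟩ :=
      ih _ hsmall ((γ : Matrix (Fin 2) (Fin 2) R) * Z) (by rw [det_mul, hZdet, γ.det_coe, one_mul])
        rfl
    have hmem : γ⁻¹ * g ∈ F := by
      simp only [F, Set.mem_iUnion, Set.mem_setOf_eq]
      refine ⟨X', Or.inl hX', Z, Or.inr ?_, hX'det, ?_⟩
      · simp only [Set.mem_iUnion]
        exact ⟨X, hXmem, t, ht, c, rfl⟩
      · rw [coe_mul', mul_assoc, ← he, ← mul_assoc, coe_inv_mul_coe, one_mul]
    have hγΔ : γ ∈ Δ := by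
      have := Δ.mul_mem hg (Δ.inv_mem (hFΔ _ hmem))
      simpa using this
    refine ⟨(rk v w)⁻¹ * γ, Δ.mul_mem (Δ.inv_mem (hUΔ _ (Or.inr ⟨v, w, hvw, rfl⟩))) hγΔ,
      X, hXmem, hd, ?_⟩
    rw [coe_mul', mul_assoc, ← hγ, hW', ← mul_assoc, coe_inv_mul_coe, one_mul]
  rw [eq_top_iff]
  intro g _
  have hD : (!![1, 0; 0, m] : Matrix (Fin 2) (Fin 2) R).det = m := by
    rw [det_fin_two_of]; ring
  obtain ⟨h, hh, X, hX, hXd, he⟩ := hup !![1, 0; 0, m] hD (by simp)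
  obtain ⟨g', hg', X', hX', hXd', he'⟩ :=
    good _ ((g : Matrix (Fin 2) (Fin 2) R) * !![1, 0; 0, m])
      (by rw [det_mul, hD, g.det_coe, one_mul]) rfl
  have hmem : g'⁻¹ * (g * h) ∈ F := by
    simp only [F, Set.mem_iUnion, Set.mem_setOf_eq]
    refine ⟨X, Or.inl hX, X', Or.inl hX', hXd, ?_⟩
    rw [coe_mul', coe_mul', mul_assoc, mul_assoc, ← he, he', ← mul_assoc, coe_inv_mul_coe, one_mul]
  have := Δ.mul_mem (Δ.mul_mem hg' (hFΔ _ hmem)) (Δ.inv_mem hh)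
  simpa [mul_assoc] using this

end Generation

/-! ### Arithmetic input from number fields -/

section NumberFieldInput
variable (K : Type*) [Field K] [NumberField K]

/-- Division with small remainder by a nonzero integer `b`: the pigeonhole principle finds two
multiples of `a` whose coordinates are close modulo `b`. -/
theorem exists_approx_int (c : ℕ) (hc : 0 < c) : ∃ T : Set ℤ, T.Finite ∧ (∀ t ∈ T, t ≠ 0) ∧
    ∀ (a : 𝓞 K) (b : ℤ), b ≠ 0 → ∃ q : 𝓞 K, ∃ t ∈ T,
      c * |Algebra.norm ℤ (t • a - b • q)| < |Algebra.norm ℤ (algebraMap ℤ (𝓞 K) b)| := by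
  classical
  set bS := RingOfIntegers.basis K
  let ι := Module.Free.ChooseBasisIndex ℤ (𝓞 K)
  set adm := AbsoluteValue.absIsAdmissible
  have dim_pos : 0 < Fintype.card ι := Fintype.card_pos_iff.mpr bS.index_nonempty
  set B := ClassGroup.normBound AbsoluteValue.abs bS
  have hB : 0 < B := ClassGroup.normBound_pos _ bS
  have hB1 : (1 : ℝ) ≤ B := by exact_mod_cast hB
  have hc1 : (1 : ℝ) ≤ c := by exact_mod_cast hc
  have hcB : (1 : ℝ) ≤ c * B := one_le_mul_of_one_le_of_one_le hc1 hB1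
  -- coordinates below `ε * |b|` force a norm below `|N b| / c`
  set ε : ℝ := (c * B)⁻¹ with hεdef
  have hε : 0 < ε := by positivity
  have hε1 : ε ≤ 1 := inv_le_one_of_one_le₀ hcB
  have hεpow : (c : ℝ) * (B * ε ^ Fintype.card ι) ≤ 1 := by
    have h1 : ε ^ Fintype.card ι ≤ ε := pow_le_of_le_one hε.le hε1 dim_pos.ne'
    calc (c : ℝ) * (B * ε ^ Fintype.card ι) ≤ c * (B * ε) := by gcongr
      _ = 1 := by rw [hεdef, ← mul_assoc]; exact mul_inv_cancel₀ (by positivity)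
  let M := adm.card ε ^ Fintype.card ι
  refine ⟨Set.range (fun p : Fin M.succ × Fin M.succ => ((p.1 : ℕ) : ℤ) - ((p.2 : ℕ) : ℤ)) \ {0},
    (Set.finite_range _).subset Set.diff_subset, fun t ht => ht.2, ?_⟩
  intro a b hb
  let s := bS.repr a
  let qs : Fin M.succ → ι → ℤ := fun j i => ((j : ℕ) : ℤ) * s i / b
  let rs : Fin M.succ → ι → ℤ := fun j i => ((j : ℕ) : ℤ) * s i % b
  have hqr : ∀ (j : Fin M.succ) i, ((j : ℕ) : ℤ) * s i = b * qs j i + rs j i := fun j i =>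
    (Int.mul_ediv_add_emod _ _).symm
  obtain ⟨j, k, hjk, happ⟩ := adm.exists_approx hε hb
    (fun (j : Fin M.succ) i => ((j : ℕ) : ℤ) * s i)
  have hjk' : ∀ i, ((AbsoluteValue.abs (rs k i - rs j i) : ℤ) : ℝ) <
      (AbsoluteValue.abs b : ℤ) • ε := happ
  refine ⟨∑ i, (qs k i - qs j i) • bS i, ((k : ℕ) : ℤ) - ((j : ℕ) : ℤ), ⟨⟨(k, j), rfl⟩, ?_⟩, ?_⟩
  · intro h
    apply hjk
    rw [Set.mem_singleton_iff, sub_eq_zero] at h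
    exact Fin.ext (by exact_mod_cast h.symm)
  set z := (((k : ℕ) : ℤ) - ((j : ℕ) : ℤ)) • a - b • ∑ i, (qs k i - qs j i) • bS i with hz
  have hrepr : ∀ i, bS.repr z i = rs k i - rs j i := by
    intro i
    have e1 : bS.repr (∑ i, (qs k i - qs j i) • bS i) i = qs k i - qs j i := by
      rw [Module.Basis.repr_sum_self]
    rw [hz, map_sub, map_smul, map_smul, Finsupp.sub_apply, Finsupp.smul_apply,
      Finsupp.smul_apply, e1, smul_eq_mul, smul_eq_mul]
    have h1 := hqr k i
    have h2 := hqr j i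
    linear_combination h1 - h2
  have hlt := ClassGroup.norm_lt (T := ℝ) AbsoluteValue.abs bS z (y := (AbsoluteValue.abs b : ℤ) • ε)
    (fun i => by rw [hrepr]; exact hjk' i)
  rw [Algebra.norm_algebraMap_of_basis bS]
  rw [AbsoluteValue.abs_apply] at hlt
  have hbpos : (0 : ℝ) < ((|b| : ℤ) : ℝ) := by exact_mod_cast abs_pos.2 hb
  have : (c : ℝ) * ((|Algebra.norm ℤ z| : ℤ) : ℝ) < ((|b| : ℤ) : ℝ) ^ Fintype.card ι := by
    have hc0 : (0 : ℝ) < c := by linarith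
    calc (c : ℝ) * ((|Algebra.norm ℤ z| : ℤ) : ℝ)
        < c * (B * ((AbsoluteValue.abs b : ℤ) • ε) ^ Fintype.card ι) := by gcongr
      _ = ((|b| : ℤ) : ℝ) ^ Fintype.card ι * (c * (B * ε ^ Fintype.card ι)) := by
        rw [zsmul_eq_mul, mul_pow, AbsoluteValue.abs_apply]; ring
      _ ≤ ((|b| : ℤ) : ℝ) ^ Fintype.card ι * 1 := by gcongr
      _ = _ := mul_one _
  rw [abs_pow]
  exact_mod_cast this

/-- The size of an algebraic integer: the absolute value of its norm. -/
noncomputable def nu : 𝓞 K →* ℕ := Int.natAbsHom.toMonoidHom.comp (Algebra.norm ℤ)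

theorem nu_apply (x : 𝓞 K) : nu K x = (Algebra.norm ℤ x).natAbs := rfl

theorem nu_pos (x : 𝓞 K) (hx : x ≠ 0) : 0 < nu K x := by
  rw [nu_apply, Int.natAbs_pos]
  exact Algebra.norm_ne_zero_iff.2 hx

/-- Division with remainder of norm less than `|N b| / c`, after multiplying the dividend by an
element of a finite set depending only on `c`. -/
theorem exists_approx (c : ℕ) (hc : 0 < c) :
    ∃ T : Set (𝓞 K), T.Finite ∧ (∀ t ∈ T, t ≠ 0) ∧ ∀ a b : 𝓞 K, b ≠ 0 →
      ∃ q, ∃ t ∈ T, c * nu K (t * a - q * b) < nu K b := by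
  obtain ⟨T, hT, hT0, h⟩ := exists_approx_int K c hc
  refine ⟨algebraMap ℤ (𝓞 K) '' T, hT.image _, ?_, ?_⟩
  · rintro _ ⟨t, ht, rfl⟩
    simpa using hT0 t ht
  intro a b hb
  obtain ⟨a', b', hb', he⟩ := Algebra.IsAlgebraic.exists_smul_eq_mul ℤ a hb
  obtain ⟨q, t, ht, hlt⟩ := h a' b' hb'
  refine ⟨q, _, ⟨t, ht, rfl⟩, ?_⟩
  have hlt' : c * nu K (t • a' - b' • q) < nu K (algebraMap ℤ (𝓞 K) b') := by
    rw [nu_apply, nu_apply]; zify; exact hlt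
  have e : algebraMap ℤ (𝓞 K) b' * (algebraMap ℤ (𝓞 K) t * a - q * b) =
      (t • a' - b' • q) * b := by
    simp only [Algebra.smul_def] at he ⊢
    linear_combination algebraMap ℤ (𝓞 K) t * he
  have e' := congrArg (nu K) e
  rw [map_mul, map_mul] at e'
  refine lt_of_mul_lt_mul_left (a := nu K (algebraMap ℤ (𝓞 K) b')) ?_ (Nat.zero_le _)
  calc nu K (algebraMap ℤ (𝓞 K) b') * (c * nu K (algebraMap ℤ (𝓞 K) t * a - q * b))
      = c * (nu K (algebraMap ℤ (𝓞 K) b') * nu K (algebraMap ℤ (𝓞 K) t * a - q * b)) := by ring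
    _ = (c * nu K (t • a' - b' • q)) * nu K b := by rw [e']; ring
    _ < nu K (algebraMap ℤ (𝓞 K) b') * nu K b :=
      Nat.mul_lt_mul_of_pos_right hlt' (nu_pos K b hb)

/-- Finiteness of the class group, in the form: up to scalars of controlled size, every nonzero
vector is the first column of a matrix of a fixed determinant `m`. -/
theorem exists_class : ∃ m : 𝓞 K, m ≠ 0 ∧
    ∀ p : Fin 2 → 𝓞 K, p ≠ 0 → ∃ x y : 𝓞 K, y ≠ 0 ∧ nu K x ≤ nu K y * nu K m ∧
      ∃ Z : Matrix (Fin 2) (Fin 2) (𝓞 K), Z.det = m ∧ ∀ i, x * p i = y * Z i 0 := by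
  classical
  set bS := RingOfIntegers.basis K
  set adm := AbsoluteValue.absIsAdmissible
  refine ⟨_, ClassGroup.prod_finsetApprox_ne_zero bS adm, ?_⟩
  intro p hp
  have hI : Ideal.span {p 0, p 1} ≠ ⊥ := by
    intro h
    apply hp
    rw [Ideal.span_eq_bot] at h
    funext i
    fin_cases i
    · exact h _ (by simp)
    · exact h _ (by simp)
  obtain ⟨J, hJ, hmJ⟩ := ClassGroup.exists_mk0_eq_mk0 bS adm
    ⟨Ideal.span {p 0, p 1}, mem_nonZeroDivisors_iff_ne_zero.2 hI⟩
  set m : 𝓞 K := algebraMap ℤ (𝓞 K) (∏ m ∈ ClassGroup.finsetApprox bS adm, m) with hm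
  have hm0 : m ≠ 0 := ClassGroup.prod_finsetApprox_ne_zero bS adm
  obtain ⟨x, y, hx, hy, he⟩ := ClassGroup.mk0_eq_mk0_iff.1 hJ
  simp only at he
  have hz : ∀ i, ∃ z, x * p i = y * z := by
    intro i
    have h1 : x * p i ∈ Ideal.span {y} * (J : Ideal (𝓞 K)) := by
      rw [← he]
      apply Ideal.mul_mem_mul (Ideal.mem_span_singleton_self _)
      apply Ideal.subset_span
      fin_cases i <;> simp
    obtain ⟨z, -, hz⟩ := Ideal.mem_span_singleton_mul.1 h1
    exact ⟨z, hz.symm⟩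
  choose z hz using hz
  have h2 : y * m ∈ Ideal.span {x} * Ideal.span {p 0, p 1} := by
    rw [he]
    exact Ideal.mul_mem_mul (Ideal.mem_span_singleton_self _) hmJ
  obtain ⟨s, hs, hsx⟩ := Ideal.mem_span_singleton_mul.1 h2
  obtain ⟨α, β, hαβ⟩ := Ideal.mem_span_pair.1 hs
  refine ⟨x, y, hy, ?_, !![z 0, -β; z 1, α], ?_, ?_⟩
  · rw [← map_mul, ← hsx, map_mul]
    refine Nat.le_mul_of_pos_right _ (nu_pos K s ?_)
    rintro rfl
    rw [mul_zero] at hsx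
    exact mul_ne_zero hy hm0 hsx.symm
  · rw [det_fin_two_of]
    apply mul_left_cancel₀ hy
    linear_combination hsx - α * hz 0 - β * hz 1 + x * hαβ
  · intro i
    rw [hz]
    fin_cases i <;> rfl

end NumberFieldInput

/-! ### Conclusion -/

section Conclusion
variable (K : Type*) [Field K] [NumberField K]

theorem finite_quotient (d : 𝓞 K) (hd : d ≠ 0) : Finite (𝓞 K ⧸ Ideal.span {d}) :=
  Ideal.finiteQuotientOfFreeOfNeBot _ (by simpa using hd)

theorem finiteIndex_E_ringOfIntegers {n : ℕ} (hn : 3 ≤ n) : (E (Fin n) (𝓞 K)).FiniteIndex := by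
  obtain ⟨m, hm, hcls⟩ := exists_class K
  obtain ⟨T, hT, hT0, happ⟩ := exists_approx K (nu K m) (nu_pos K m hm)
  obtain ⟨F, hF, hgen⟩ := exists_finite_generation (finite_quotient K) (nu K) (nu_pos K) hm hcls
    T hT hT0 happ
  exact finiteIndex_E_of_three (finite_quotient K)
    (finiteIndex_E3 (finite_quotient K) F hF (Triv (𝓞 K)) (fun g hg => mphi_triv hg) hgen) hn

end Conclusion

end UnipGen

/-- For a number field `K` with ring of integers `O_K`, `n ≥ 3` and `k ≥ 1`,
the subgroup of `SL_n(O_K)` generated by the upper triangular unipotent matrices and the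
lower triangular unipotent matrices all of whose off-diagonal entries lie in `k·O_K` has
finite index in `SL_n(O_K)`. -/
theorem unipotent_generators_sl_n_ring_of_integers
    (K : Type*) [Field K] [NumberField K] (n k : ℕ) (hn : 3 ≤ n) (hk : 1 ≤ k) :
    (Subgroup.closure
      ({g : Matrix.SpecialLinearGroup (Fin n) (𝓞 K) |
          (∀ i, g.1 i i = 1) ∧ (∀ i j : Fin n, j < i → g.1 i j = 0) ∧
          (∀ i j : Fin n, i ≠ j → (k : 𝓞 K) ∣ g.1 i j)} ∪
       {g : Matrix.SpecialLinearGroup (Fin n) (𝓞 K) |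
          (∀ i, g.1 i i = 1) ∧ (∀ i j : Fin n, i < j → g.1 i j = 0) ∧
          (∀ i j : Fin n, i ≠ j → (k : 𝓞 K) ∣ g.1 i j)})).FiniteIndex := by
  have hk0 : (k : 𝓞 K) ≠ 0 := by
    exact_mod_cast (Nat.one_le_iff_ne_zero.mp hk)
  have : Finite (𝓞 K ⧸ Ideal.span {(k : 𝓞 K) * k}) :=
    UnipGen.finite_quotient K _ (mul_ne_zero hk0 hk0)
  refine UnipGen.finiteIndex_of_E (UnipGen.third_fin hn) (k : 𝓞 K) _ ?_
    (UnipGen.finiteIndex_E_ringOfIntegers K hn)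
  intro i j hij x
  have hdiag : ∀ a, (UnipGen.el i j ((k : 𝓞 K) * x)).1 a a = 1 := by
    intro a
    rw [UnipGen.coe_el hij, Matrix.add_apply, Matrix.one_apply_eq, Matrix.single_apply, if_neg,
      add_zero]
    rintro ⟨rfl, rfl⟩
    exact hij rfl
  have hoff : ∀ a b, a ≠ b → (UnipGen.el i j ((k : 𝓞 K) * x)).1 a b =
      if i = a ∧ j = b then (k : 𝓞 K) * x else 0 := by
    intro a b hab
    rw [UnipGen.coe_el hij, Matrix.add_apply, Matrix.one_apply_ne hab, zero_add,
      Matrix.single_apply]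
  have hdvd : ∀ a b, a ≠ b → (k : 𝓞 K) ∣ (UnipGen.el i j ((k : 𝓞 K) * x)).1 a b := by
    intro a b hab
    rw [hoff a b hab]
    split_ifs
    · exact dvd_mul_right _ _
    · exact dvd_zero _
  apply Subgroup.subset_closure
  rcases lt_or_gt_of_ne hij with h | h
  · refine Or.inl ⟨hdiag, fun a b hab => ?_, hdvd⟩
    rw [hoff a b hab.ne', if_neg]
    rintro ⟨rfl, rfl⟩
    exact lt_asymm h hab
  · refine Or.inr ⟨hdiag, fun a b hab => ?_, hdvd⟩
    rw [hoff a b hab.ne, if_neg]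
    rintro ⟨rfl, rfl⟩
    exact lt_asymm h hab
end
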